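/- arXiv:2004.13884 — 2 statements merged into one kernel-verified Lean document; each statement's English description precedes it below -/
import Mathlib

section
/- Let C ⊆ ℝⁿ be the convex polyhedron determined by vectors x*_1,…,x*_s ∈ ℝⁿ and scalars c_1,…,c_s, let g : ℝⁿ×ℝ^d → ℝⁿ be locally Lipschitz continuous, and let F(x,u) := N(x;C) + g(x,u). Fix x ∈ C at which PLICQ holds, u ∈ ℝ^d, and ω ∈ g(x,u) + N(x;C). Then for every w ∈ ℝⁿ and every z ∈ D*F((x,u),ω)(w) the following hold: D*N_C(x, ω − g(x,u))(w) ≠ ∅, and there exist real numbers γ_j for j ∈ I₀(w) ∪ I_>(w), with γ_j ≥ 0 whenever j ∈ I_>(w), such that z − (Σ_{j ∈ I₀(w) ∪ I_>(w)} γ_j x*_j, 0) ∈ ∂⟨w,g⟩(x,u), where I₀(w), I_>(w) are taken relative to the point x. -/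
open Filter Topology Set MeasureTheory
open scoped RealInnerProductSpace

noncomputable section

/-- The limiting (Mordukhovich) normal cone to a set `Ω` at `z`. -/
def limNormal {E : Type*} [NormedAddCommGroup E] [NormedSpace ℝ E]
    (Ω : Set E) (z : E) : Set E :=
  {v | ∃ (zk vk : ℕ → E) (tk : ℕ → ℝ) (yk : ℕ → E),
      Tendsto zk atTop (𝓝 z) ∧ Tendsto vk atTop (𝓝 v) ∧
      (∀ k, 0 ≤ tk k) ∧ (∀ k, yk k ∈ Ω) ∧
      (∀ k, ‖zk k - yk k‖ = Metric.infDist (zk k) Ω) ∧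
      (∀ k, vk k = tk k • (zk k - yk k))}

/-- The convex normal cone to a convex set `C` at `x` (empty if `x ∉ C`). -/
def convNormal {E : Type*} [NormedAddCommGroup E] [InnerProductSpace ℝ E]
    (C : Set E) (x : E) : Set E :=
  {v | x ∈ C ∧ ∀ y ∈ C, ⟪v, y - x⟫ ≤ 0}

/-- Pairing of two components into the `L²` product. -/
def pmk {E F : Type*} [NormedAddCommGroup E] [NormedAddCommGroup F]
    (a : E) (b : F) : WithLp 2 (E × F) :=
  (WithLp.equiv 2 (E × F)).symm (a, b)

/-- First component of an `L²` product element. -/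
def pfst {E F : Type*} [NormedAddCommGroup E] [NormedAddCommGroup F]
    (q : WithLp 2 (E × F)) : E := ((WithLp.equiv 2 (E × F)) q).1

/-- Second component of an `L²` product element. -/
def psnd {E F : Type*} [NormedAddCommGroup E] [NormedAddCommGroup F]
    (q : WithLp 2 (E × F)) : F := ((WithLp.equiv 2 (E × F)) q).2

/-- The coderivative of a set-valued map `G` at `(z, y) ∈ gph G`, applied to `w`. -/
def coderiv {E F : Type*} [NormedAddCommGroup E] [NormedSpace ℝ E]
    [NormedAddCommGroup F] [NormedSpace ℝ F]
    (G : E → Set F) (z : E) (y : F) (w : F) : Set E :=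
  {v | pmk v (-w) ∈ limNormal {q : WithLp 2 (E × F) | psnd q ∈ G (pfst q)} (pmk z y)}

/-- The limiting subdifferential of `h : E → ℝ` at `z`, via limiting normals to the epigraph. -/
def limSubdiff {E : Type*} [NormedAddCommGroup E] [NormedSpace ℝ E]
    (h : E → ℝ) (z : E) : Set E :=
  {v | pmk v (-1 : ℝ) ∈ limNormal {q : WithLp 2 (E × ℝ) | h (pfst q) ≤ psnd q} (pmk z (h z))}
/-- `Euc n` is the Euclidean space `ℝⁿ`. -/
abbrev Euc (n : ℕ) := EuclideanSpace ℝ (Fin n)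


section helpers

theorem farkas_aux {E ι : Type*} [NormedAddCommGroup E] [InnerProductSpace ℝ E] [DecidableEq ι]
    (S : Finset ι) : ∀ (v : ι → E) (q : E),
      (∀ h : E, (∀ i ∈ S, ⟪v i, h⟫ ≤ 0) → ⟪q, h⟫ ≤ 0) →
      ∃ l : ι → ℝ, (∀ i, 0 ≤ l i) ∧ (∀ i, i ∉ S → l i = 0) ∧ q = ∑ i ∈ S, l i • v i := by
  induction S using Finset.induction_on with
  | empty =>
    intro v q hq
    refine ⟨fun _ => 0, by simp, by simp, ?_⟩
    have := hq q (by simp)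
    rw [real_inner_self_eq_norm_sq] at this
    have h0 : ‖q‖ = 0 := by nlinarith [norm_nonneg q]
    simpa using h0
  | insert a S ha ih =>
    intro v q hq
    by_cases hc : ∀ h : E, (∀ i ∈ S, ⟪v i, h⟫ ≤ 0) → ⟪q, h⟫ ≤ 0
    · obtain ⟨l, h1, h2, h3⟩ := ih v q hc
      refine ⟨l, h1, fun i hi => h2 i (fun h => hi (Finset.mem_insert_of_mem h)), ?_⟩
      rw [Finset.sum_insert ha, h2 a ha, zero_smul, zero_add, ← h3]
    · push Not at hc
      obtain ⟨x1, hx1, hqx1⟩ := hc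
      have hpos : 0 < ⟪v a, x1⟫ := by
        by_contra hcon
        push Not at hcon
        have := hq x1 (by
          intro i hi
          rcases Finset.mem_insert.1 hi with rfl | hi
          · exact hcon
          · exact hx1 i hi)
        linarith
      set r := ⟪v a, x1⟫ with hr
      set x0 := r⁻¹ • x1 with hx0
      have hax0 : ⟪v a, x0⟫ = 1 := by
        rw [hx0, inner_smul_right, ← hr]; field_simp
      have hix0 : ∀ i ∈ S, ⟪v i, x0⟫ ≤ 0 := by
        intro i hi
        rw [hx0, inner_smul_right]
        exact mul_nonpos_of_nonneg_of_nonpos (by positivity) (hx1 i hi)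
      have hqx0 : 0 < ⟪q, x0⟫ := by
        rw [hx0, inner_smul_right]; positivity
      obtain ⟨l, h1, h2, h3⟩ := ih (fun i => v i - ⟪v i, x0⟫ • v a) (q - ⟪q, x0⟫ • v a) (by
        intro h hh
        have := hq (h - ⟪v a, h⟫ • x0) (by
          intro i hi
          rcases Finset.mem_insert.1 hi with rfl | hi
          · simp [inner_sub_right, inner_smul_right, hax0]
          · have := hh i hi
            simp only [inner_sub_left, inner_smul_left, inner_sub_right, inner_smul_right,
              conj_trivial] at this ⊢
            linarith)
        simp only [inner_sub_left, inner_smul_left, inner_sub_right, inner_smul_right,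
              conj_trivial] at this ⊢
        linarith)
      refine ⟨fun i => if i = a then ⟪q, x0⟫ - ∑ i ∈ S, l i * ⟪v i, x0⟫ else l i, ?_, ?_, ?_⟩
      · intro i
        dsimp only
        split_ifs with hi
        · have : ∑ i ∈ S, l i * ⟪v i, x0⟫ ≤ 0 :=
            Finset.sum_nonpos fun i hi => mul_nonpos_of_nonneg_of_nonpos (h1 i) (hix0 i hi)
          linarith
        · exact h1 i
      · intro i hi
        rw [Finset.mem_insert, not_or] at hi
        simp [hi.1, h2 i hi.2]
      · rw [Finset.sum_insert ha]
        simp only [if_true]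
        have e : ∑ i ∈ S, (if i = a then ⟪q, x0⟫ - ∑ i ∈ S, l i * ⟪v i, x0⟫ else l i) • v i
            = ∑ i ∈ S, l i • v i := by
          apply Finset.sum_congr rfl
          intro i hi
          rw [if_neg]
          rintro rfl
          exact ha hi
        rw [e]
        have h4 : q = ⟪q, x0⟫ • v a + ∑ i ∈ S, l i • (v i - ⟪v i, x0⟫ • v a) := by
          rw [← h3]; abel
        conv_lhs => rw [h4]
        simp only [smul_sub, Finset.sum_sub_distrib, sub_smul, Finset.sum_smul, mul_smul]
        abel

/-- Local proximal inequality yields limiting normals. -/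
theorem mem_limNormal_of_prox {E : Type*} [NormedAddCommGroup E] [InnerProductSpace ℝ E]
    (Ω : Set E) (z v : E)
    (H : ∀ ε > 0, ∃ y0 ∈ Ω, ∃ v0 : E, ‖y0 - z‖ < ε ∧ ‖v0 - v‖ < ε ∧ ∃ σ δ : ℝ, 0 < δ ∧
      ∀ y ∈ Ω, ‖y - y0‖ < δ → ⟪v0, y - y0⟫ ≤ σ * ‖y - y0‖ ^ 2) :
    v ∈ limNormal Ω z := by
  have key : ∀ k : ℕ, ∃ (zk vk : E) (tk : ℝ) (yk : E), ‖zk - z‖ < 2 * (1 / ((k : ℝ) + 1)) ∧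
      ‖vk - v‖ < 1 / ((k : ℝ) + 1) ∧ 0 ≤ tk ∧ yk ∈ Ω ∧ ‖zk - yk‖ = Metric.infDist zk Ω ∧
      vk = tk • (zk - yk) := by
    intro k
    set ε : ℝ := 1 / ((k : ℝ) + 1) with hε
    have hε0 : 0 < ε := by positivity
    obtain ⟨y0, hy0, v0, h1, h2, σ, δ, hδ, h3⟩ := H ε hε0
    obtain ⟨t, ht, ht1, ht2, ht3⟩ : ∃ t : ℝ, 0 < t ∧ t * (2 * ‖v0‖) < δ ∧ t * ‖v0‖ < ε ∧
        2 * t * σ ≤ 1 := by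
      set M := 2 * ‖v0‖ + 2 * |σ| + 1 with hM
      have hM0 : 0 < M := by positivity
      refine ⟨min δ (min ε 1) / M / 2, by positivity, ?_, ?_, ?_⟩
      all_goals
        have m1 := min_le_left δ (min ε 1)
        have m2 := (min_le_right δ (min ε 1)).trans (min_le_left _ _)
        have m3 := (min_le_right δ (min ε 1)).trans (min_le_right _ _)
        set m := min δ (min ε 1)
        have hm : 0 < m := by positivity
        have hmM : m / M * M = m := by field_simp
        have hq : 0 < m / M := by positivity
        have n1 : 2 * ‖v0‖ ≤ M := by have := abs_nonneg σ; linarith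
        have n2 : 2 * σ ≤ M := by have := le_abs_self σ; have := norm_nonneg v0; have := abs_nonneg σ; linarith
        have := mul_le_mul_of_nonneg_left n1 hq.le
        have := mul_le_mul_of_nonneg_left n2 hq.le
        nlinarith
    refine ⟨y0 + t • v0, v0, t⁻¹, y0, ?_, h2, by positivity, hy0, ?_, ?_⟩
    · calc ‖y0 + t • v0 - z‖ = ‖(y0 - z) + t • v0‖ := by congr 1; abel
        _ ≤ ‖y0 - z‖ + ‖t • v0‖ := norm_add_le _ _
        _ = ‖y0 - z‖ + t * ‖v0‖ := by rw [norm_smul, Real.norm_of_nonneg ht.le]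
        _ < _ := by linarith
    · apply le_antisymm
      · rw [Metric.infDist_eq_iInf]
        have : Nonempty Ω := ⟨⟨y0, hy0⟩⟩
        apply le_ciInf
        rintro ⟨y, hy⟩
        rw [dist_eq_norm]
        simp only [add_sub_cancel_left]
        have e0 : y0 + t • v0 - y = t • v0 - (y - y0) := by abel
        rw [e0]
        by_cases hd : ‖y - y0‖ < δ
        · have := h3 y hy hd
          apply le_of_sq_le_sq _ (norm_nonneg _)
          rw [norm_sub_sq_real, inner_smul_left]
          simp only [conj_trivial]
          have h5 : 2 * t * ⟪v0, y - y0⟫ ≤ 2 * t * (σ * ‖y - y0‖ ^ 2) :=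
            mul_le_mul_of_nonneg_left this (by positivity)
          have h6 : 2 * t * σ * ‖y - y0‖ ^ 2 ≤ 1 * ‖y - y0‖ ^ 2 :=
            mul_le_mul_of_nonneg_right ht3 (by positivity)
          nlinarith
        · push Not at hd
          have h5 := norm_sub_norm_le (y - y0) (t • v0)
          rw [norm_sub_rev (y - y0) (t • v0)] at h5
          have : ‖t • v0‖ = t * ‖v0‖ := by rw [norm_smul, Real.norm_of_nonneg ht.le]
          linarith
      · rw [← dist_eq_norm]; exact Metric.infDist_le_dist_of_mem hy0
    · rw [add_sub_cancel_left, smul_smul, inv_mul_cancel₀ ht.ne', one_smul]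
  choose zk vk tk yk h1 h2 h3 h4 h5 h6 using key
  have hlim := tendsto_one_div_add_atTop_nhds_zero_nat (𝕜 := ℝ)
  refine ⟨zk, vk, tk, yk, ?_, ?_, h3, h4, h5, h6⟩
  · rw [tendsto_iff_norm_sub_tendsto_zero]
    refine squeeze_zero (fun _ => norm_nonneg _) (fun k => (h1 k).le) ?_
    simpa using hlim.const_mul 2
  · rw [tendsto_iff_norm_sub_tendsto_zero]
    exact squeeze_zero (fun _ => norm_nonneg _) (fun k => (h2 k).le) hlim

theorem prox_of_mem_limNormal {E : Type*} [NormedAddCommGroup E] [InnerProductSpace ℝ E]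
    (Ω : Set E) (z v : E) (hzΩ : z ∈ Ω) (hv : v ∈ limNormal Ω z) :
    ∀ ε > 0, ∃ y0 ∈ Ω, ∃ v0 : E, ‖y0 - z‖ < ε ∧ ‖v0 - v‖ < ε ∧ ∃ σ : ℝ, 0 ≤ σ ∧
      ∀ y ∈ Ω, ⟪v0, y - y0⟫ ≤ σ * ‖y - y0‖ ^ 2 := by
  obtain ⟨zk, vk, tk, yk, hz, hvk, ht, hy, hp, he⟩ := hv
  intro ε hε
  rw [tendsto_iff_norm_sub_tendsto_zero] at hz hvk
  obtain ⟨k, hk1, hk2⟩ := ((hz.eventually_lt_const (half_pos hε)).and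
    (hvk.eventually_lt_const hε)).exists
  refine ⟨yk k, hy k, vk k, ?_, hk2, tk k / 2, by have := ht k; positivity, ?_⟩
  · have h1 : ‖zk k - yk k‖ ≤ ‖zk k - z‖ := by
      rw [hp k, ← dist_eq_norm]; exact Metric.infDist_le_dist_of_mem hzΩ
    have h2 : ‖yk k - z‖ ≤ ‖yk k - zk k‖ + ‖zk k - z‖ := norm_sub_le_norm_sub_add_norm_sub _ _ _
    rw [norm_sub_rev (yk k) (zk k)] at h2
    linarith
  · intro y hyΩ
    have h1 : ‖zk k - yk k‖ ≤ ‖zk k - y‖ := by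
      rw [hp k, ← dist_eq_norm (zk k) y]; exact Metric.infDist_le_dist_of_mem hyΩ
    have e : zk k - y = (zk k - yk k) - (y - yk k) := by abel
    have h2 := pow_le_pow_left₀ (norm_nonneg _) h1 2
    rw [e, norm_sub_sq_real (zk k - yk k) (y - yk k)] at h2
    rw [he k, inner_smul_left]
    simp only [conj_trivial]
    have := mul_le_mul_of_nonneg_left (show 2 * ⟪zk k - yk k, y - yk k⟫ ≤ ‖y - yk k‖ ^ 2 by linarith) (ht k)
    linarith

/-- Fuzzy step: a cone-restricted approximate minimum yields an unrestricted proximal subgradient. -/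
theorem fuzzy_step {V : Type*} [NormedAddCommGroup V] [InnerProductSpace ℝ V]
    [FiniteDimensional ℝ V] (h : V → ℝ) (Q : Set V) (hQc : IsClosed Q) (hQ0 : (0 : V) ∈ Q)
    (hQadd : ∀ a ∈ Q, ∀ b ∈ Q, ∀ t : ℝ, 0 ≤ t → a + t • b ∈ Q)
    (z p0 : V) (L ε ρ : ℝ) (hL : 0 ≤ L) (hε : 0 < ε) (hρ : 0 < ρ)
    (hlip : ∀ a b : V, ‖a‖ ≤ ρ → ‖b‖ ≤ ρ → |h (p0 + a) - h (p0 + b)| ≤ L * ‖a - b‖)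
    (hmin : ∀ e ∈ Q, ‖e‖ ≤ ρ → ⟪z, e⟫ ≤ h (p0 + e) - h p0 + ε * ‖e‖) :
    ∃ a r : V, ‖a‖ < ρ ∧ ‖r‖ ≤ 2 * (L + ‖z‖) ∧ (∀ e ∈ Q, ⟪r, e⟫ ≤ 2 * ε * ‖e‖) ∧
      ∃ σ δ : ℝ, 0 < δ ∧ ∀ p, ‖p - (p0 + a)‖ < δ →
        ⟪z - r, p - (p0 + a)⟫ ≤ h p - h (p0 + a) + σ * ‖p - (p0 + a)‖ ^ 2 := by
  set L' := L + ‖z‖ with hL'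
  have hL'0 : 0 ≤ L' := by positivity
  obtain ⟨M, hM, hM1, hM2⟩ : ∃ M : ℝ, 0 < M ∧ L' < M * (ρ / 2) ∧ L' * L' < M * (ε * (ρ / 2)) := by
    refine ⟨L' / (ρ / 2) + L' * L' / (ε * (ρ / 2)) + 1, by positivity, ?_, ?_⟩
    · have : L' / (ρ / 2) * (ρ / 2) = L' := by field_simp
      have h2 : 0 ≤ L' * L' / (ε * (ρ / 2)) := by positivity
      nlinarith
    · have : L' * L' / (ε * (ρ / 2)) * (ε * (ρ / 2)) = L' * L' := by field_simp
      have h2 : 0 ≤ L' / (ρ / 2) := by positivity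
      have : 0 < ε * (ρ / 2) := by positivity
      nlinarith
  set Φ : V × V → ℝ := fun q => h (p0 + q.1) - ⟪z, q.1⟫ + 2 * ε * ‖q.2‖ + M * ‖q.1 - q.2‖ ^ 2 with hΦ
  set K : Set (V × V) := Metric.closedBall (0 : V) ρ ×ˢ (Metric.closedBall (0 : V) ρ ∩ Q) with hK
  have hKc : IsCompact K :=
    (isCompact_closedBall _ _).prod ((isCompact_closedBall _ _).inter_right hQc)
  have hK0 : ((0 : V), (0 : V)) ∈ K := by
    simp [hK, hρ.le, hQ0]
  have hcont : ContinuousOn Φ K := by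
    have h1 : ContinuousOn (fun a : V => h (p0 + a)) (Metric.closedBall 0 ρ) := by
      apply LipschitzOnWith.continuousOn (K := ⟨L, hL⟩)
      apply LipschitzOnWith.of_dist_le_mul
      intro a ha b hb
      rw [Real.dist_eq, dist_eq_norm]
      exact hlip a b (by simpa using ha) (by simpa using hb)
    have h2 : ContinuousOn (fun q : V × V => h (p0 + q.1)) K :=
      h1.comp continuousOn_fst (fun q hq => hq.1)
    have h3 : Continuous (fun q : V × V => ⟪z, q.1⟫) := by fun_prop
    have h4 : Continuous (fun q : V × V => 2 * ε * ‖q.2‖) := by fun_prop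
    have h5 : Continuous (fun q : V × V => M * ‖q.1 - q.2‖ ^ 2) := by fun_prop
    exact ((h2.sub h3.continuousOn).add h4.continuousOn).add h5.continuousOn
  obtain ⟨⟨a, b⟩, ⟨ha, hb, hbQ⟩, hminab⟩ := hKc.exists_isMinOn ⟨_, hK0⟩ hcont
  simp only [mem_closedBall_zero_iff] at ha hb
  have hmn : ∀ a' b' : V, ‖a'‖ ≤ ρ → ‖b'‖ ≤ ρ → b' ∈ Q → Φ (a, b) ≤ Φ (a', b') := by
    intro a' b' h1 h2 h3
    exact hminab (show (a', b') ∈ K from ⟨by simpa using h1, by simpa using h2, h3⟩)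
  have h00 : Φ (a, b) ≤ h p0 := by
    have := hmn 0 0 (by simpa using hρ.le) (by simpa using hρ.le) hQ0
    simpa [hΦ] using this
  set D := ‖a - b‖ with hD
  have hD0 : 0 ≤ D := norm_nonneg _
  have hmain : ε * ‖b‖ + M * D ^ 2 ≤ L' * D := by
    have h1 := abs_le.1 (hlip a b ha hb)
    have h2 := hmin b hbQ hb
    have h3 : ⟪z, a⟫ - ⟪z, b⟫ ≤ ‖z‖ * D := by
      rw [← inner_sub_right]; exact real_inner_le_norm _ _
    have h4 : h (p0 + a) - ⟪z, a⟫ + 2 * ε * ‖b‖ + M * D ^ 2 ≤ h p0 := h00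
    rw [hL']
    nlinarith [h1.1]
  have hMD : M * D ≤ L' := by
    rcases hD0.eq_or_lt with h0 | h0
    · rw [← h0]; simpa using hL'0
    · have : 0 ≤ ε * ‖b‖ := by positivity
      by_contra hcon
      push Not at hcon
      nlinarith
  have hDρ : D < ρ / 2 := by
    by_contra hcon
    push Not at hcon
    nlinarith
  have hbρ : ‖b‖ < ρ / 2 := by
    by_contra hcon
    push Not at hcon
    have h1 : ε * (ρ / 2) ≤ L' * D := by
      have : 0 ≤ M * D ^ 2 := by positivity
      nlinarith
    have h2 : L' * (M * D) ≤ L' * L' := mul_le_mul_of_nonneg_left hMD hL'0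
    nlinarith
  have haρ : ‖a‖ < ρ := by
    have : ‖a‖ ≤ ‖a - b‖ + ‖b‖ := by simpa using norm_add_le (a - b) b
    linarith
  refine ⟨a, (2 * M) • (a - b), haρ, ?_, ?_, M, ρ - ‖a‖, by linarith, ?_⟩
  · rw [norm_smul, Real.norm_of_nonneg (by positivity)]
    linarith
  · intro e he
    have hev : ∀ t : ℝ, 0 < t → t * ‖e‖ ≤ ρ / 2 →
        ⟪(2 * M) • (a - b), e⟫ ≤ 2 * ε * ‖e‖ + t * (M * ‖e‖ ^ 2) := by
      intro t ht hte
      have hn : ‖t • e‖ = t * ‖e‖ := by rw [norm_smul, Real.norm_of_nonneg ht.le]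
      have h0 := norm_add_le b (t • e)
      rw [hn] at h0
      have h1 := hmn a (b + t • e) ha (by linarith) (hQadd b hbQ e he t ht.le)
      simp only [hΦ] at h1
      have e1 : a - (b + t • e) = (a - b) - t • e := by abel
      rw [e1, norm_sub_sq_real (a - b) (t • e), hn, inner_smul_right] at h1
      rw [inner_smul_left]
      simp only [conj_trivial]
      have h2 : 2 * ε * ‖b + t • e‖ ≤ 2 * ε * (‖b‖ + t * ‖e‖) :=
        mul_le_mul_of_nonneg_left h0 (by positivity)
      have h3 : t * (2 * M * ⟪a - b, e⟫) ≤ t * (2 * ε * ‖e‖ + t * (M * ‖e‖ ^ 2)) := by nlinarith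
      exact le_of_mul_le_mul_left h3 ht
    have hlim : Tendsto (fun t : ℝ => 2 * ε * ‖e‖ + t * (M * ‖e‖ ^ 2)) (𝓝[>] 0)
        (𝓝 (2 * ε * ‖e‖)) := by
      have : Continuous (fun t : ℝ => 2 * ε * ‖e‖ + t * (M * ‖e‖ ^ 2)) := by fun_prop
      have h2 := this.tendsto 0
      simp only [zero_mul, add_zero] at h2
      exact h2.mono_left nhdsWithin_le_nhds
    refine ge_of_tendsto hlim ?_
    have h6 : ∀ᶠ t : ℝ in 𝓝[>] 0, t * ‖e‖ < ρ / 2 := by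
      have : Continuous (fun t : ℝ => t * ‖e‖) := by fun_prop
      have h2 := this.tendsto 0
      simp only [zero_mul] at h2
      exact (h2.mono_left nhdsWithin_le_nhds).eventually_lt_const (by positivity)
    filter_upwards [h6, self_mem_nhdsWithin] with t ht1 ht2
    exact hev t ht2 ht1.le
  · intro p hp
    set f := p - (p0 + a) with hf
    have hpe : p = p0 + (a + f) := by rw [hf]; abel
    have h0 := norm_add_le a f
    have h1 := hmn (a + f) b (by linarith) hb hbQ
    simp only [hΦ] at h1
    have e1 : a + f - b = (a - b) + f := by abel
    rw [e1, norm_add_sq_real, ← hpe, inner_add_right] at h1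
    rw [inner_sub_left, inner_smul_left]
    simp only [conj_trivial]
    nlinarith

theorem loc_poly {E : Type*} [NormedAddCommGroup E] [InnerProductSpace ℝ E] {s : ℕ}
    (xs : Fin s → E) (c : Fin s → ℝ) (C : Set E) (hC : C = {x | ∀ j, ⟪xs j, x⟫ ≤ c j})
    (x0 : E) (hx0 : x0 ∈ C) :
    ∃ δ > 0, ∀ y, ‖y - x0‖ < δ → (∀ j, ⟪xs j, x0⟫ = c j → ⟪xs j, y⟫ ≤ c j) → y ∈ C := by
  have h1 : ∀ᶠ y in 𝓝 x0, ∀ j, (⟪xs j, x0⟫ = c j → ⟪xs j, y⟫ ≤ c j) → ⟪xs j, y⟫ ≤ c j := by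
    rw [eventually_all]
    intro j
    by_cases hj : ⟪xs j, x0⟫ = c j
    · exact Eventually.of_forall fun y h => h hj
    · have hlt : ⟪xs j, x0⟫ < c j := by
        rw [hC] at hx0
        exact lt_of_le_of_ne (hx0 j) hj
      have hcont : Continuous (fun y => ⟪xs j, y⟫) := by fun_prop
      filter_upwards [(hcont.tendsto x0).eventually_lt_const hlt] with y hy _
      exact hy.le
  obtain ⟨δ, hδ, h⟩ := Metric.eventually_nhds_iff.1 h1
  refine ⟨δ, hδ, fun y hy hj => ?_⟩
  rw [hC]
  intro j
  exact h (by rwa [dist_eq_norm]) j (hj j)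

theorem le_zero_of_small (a b : ℝ) (h : ∀ t : ℝ, 0 < t → t ≤ 1 → a ≤ t * b) : a ≤ 0 := by
  by_contra hc
  push Not at hc
  have hb : 0 < b := by have := h 1 one_pos le_rfl; linarith
  have h1 := h (min 1 (a / (2 * b))) (by positivity) (min_le_left _ _)
  have h2 : min 1 (a / (2 * b)) * b ≤ a / (2 * b) * b :=
    mul_le_mul_of_nonneg_right (min_le_right _ _) hb.le
  have h3 : a / (2 * b) * b = a / 2 := by field_simp
  linarith

theorem tangent_inner {E : Type*} [NormedAddCommGroup E] [InnerProductSpace ℝ E] {s : ℕ}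
    (xs : Fin s → E) (c : Fin s → ℝ) (C : Set E) (hC : C = {x | ∀ j, ⟪xs j, x⟫ ≤ c j})
    (x0 ν : E) (hν : ν ∈ convNormal C x0) (h : E)
    (hh : ∀ j, ⟪xs j, x0⟫ = c j → ⟪xs j, h⟫ ≤ 0) : ⟪ν, h⟫ ≤ 0 := by
  obtain ⟨δ, hδ, H⟩ := loc_poly xs c C hC x0 hν.1
  set t := δ / (2 * (‖h‖ + 1)) with ht
  have ht0 : 0 < t := by positivity
  have hlt : t * ‖h‖ < δ := by
    have : t * (‖h‖ + 1) = δ / 2 := by rw [ht]; field_simp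
    nlinarith [norm_nonneg h]
  have h1 := H (x0 + t • h) (by
      rw [add_sub_cancel_left, norm_smul, Real.norm_of_nonneg ht0.le]; exact hlt) (by
    intro j hj
    rw [inner_add_right, inner_smul_right, hj]
    have := mul_nonpos_of_nonneg_of_nonpos ht0.le (hh j hj)
    linarith)
  have h2 := hν.2 _ h1
  rw [add_sub_cancel_left, inner_smul_right] at h2
  by_contra hc
  push Not at hc
  have := mul_pos ht0 hc
  linarith

theorem crit_inner {E : Type*} [NormedAddCommGroup E] [InnerProductSpace ℝ E] {s : ℕ}
    (xs : Fin s → E) (c : Fin s → ℝ) (C : Set E) (hC : C = {x | ∀ j, ⟪xs j, x⟫ ≤ c j})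
    (x0 ν w : E) (hν : ν ∈ convNormal C x0) (hw : ∀ j, ⟪xs j, x0⟫ = c j → 0 ≤ ⟪xs j, w⟫)
    (hνw : ⟪w, ν⟫ = 0) (h : E)
    (hh : ∀ j, ⟪xs j, x0⟫ = c j → ⟪xs j, h⟫ ≤ 0)
    (hh0 : ∀ j, ⟪xs j, x0⟫ = c j → ⟪xs j, w⟫ = 0 → ⟪xs j, h⟫ = 0) : ⟪ν, h⟫ = 0 := by
  apply le_antisymm (tangent_inner xs c C hC x0 ν hν h hh)
  obtain ⟨M, hM⟩ : ∃ M : ℝ, ∀ j, ⟪xs j, x0⟫ = c j → -⟪xs j, h⟫ ≤ M * ⟪xs j, w⟫ := by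
    have h1 : ∀ᶠ M : ℝ in atTop, ∀ j, ⟪xs j, x0⟫ = c j → -⟪xs j, h⟫ ≤ M * ⟪xs j, w⟫ := by
      rw [eventually_all]
      intro j
      by_cases hj : ⟪xs j, x0⟫ = c j
      · rcases (hw j hj).eq_or_lt with h0 | h0
        · refine Eventually.of_forall fun M _ => ?_
          rw [hh0 j hj h0.symm, ← h0]; simp
        · filter_upwards [(tendsto_id.atTop_mul_const h0).eventually_ge_atTop (-⟪xs j, h⟫)]
            with M hM _
          exact hM
      · exact Eventually.of_forall fun M h => absurd h hj
    exact h1.exists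
  have := tangent_inner xs c C hC x0 ν hν (-h - M • w) (by
    intro j hj
    have := hM j hj
    rw [inner_sub_right, inner_neg_right, inner_smul_right]
    linarith)
  rw [inner_sub_right, inner_neg_right, inner_smul_right, real_inner_comm w ν, hνw] at this
  linarith

theorem norm_pmk_le {E F : Type*} [NormedAddCommGroup E] [NormedAddCommGroup F]
    (a : E) (b : F) : ‖pmk a b‖ ≤ ‖a‖ + ‖b‖ := by
  apply le_of_sq_le_sq _ (by positivity)
  rw [WithLp.prod_norm_sq_eq_of_L2]
  change ‖a‖ ^ 2 + ‖b‖ ^ 2 ≤ _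
  nlinarith [norm_nonneg a, norm_nonneg b]

theorem pmk_sub {E F : Type*} [NormedAddCommGroup E] [NormedAddCommGroup F]
    (a a' : E) (b b' : F) : pmk a b - pmk a' b' = pmk (a - a') (b - b') := rfl

theorem norm_pfst_le {E F : Type*} [NormedAddCommGroup E] [NormedAddCommGroup F]
    (q : WithLp 2 (E × F)) : ‖pfst q‖ ≤ ‖q‖ := WithLp.norm_fst_le _ q

theorem norm_psnd_le {E F : Type*} [NormedAddCommGroup E] [NormedAddCommGroup F]
    (q : WithLp 2 (E × F)) : ‖psnd q‖ ≤ ‖q‖ := WithLp.norm_snd_le _ q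

theorem norm_sq_p {E F : Type*} [NormedAddCommGroup E] [NormedAddCommGroup F]
    (q : WithLp 2 (E × F)) : ‖q‖ ^ 2 = ‖pfst q‖ ^ 2 + ‖psnd q‖ ^ 2 :=
  WithLp.prod_norm_sq_eq_of_L2 q

theorem inner_p {E F : Type*} [NormedAddCommGroup E] [InnerProductSpace ℝ E]
    [NormedAddCommGroup F] [InnerProductSpace ℝ F]
    (q r : WithLp 2 (E × F)) : ⟪q, r⟫ = ⟪pfst q, pfst r⟫ + ⟪psnd q, psnd r⟫ := rfl

/-- Extraction of proximal data from the coderivative. -/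
theorem core {n d s : ℕ}
    (xs : Fin s → Euc n) (c : Fin s → ℝ)
    (g : WithLp 2 (Euc n × Euc d) → Euc n) (hg : Continuous g)
    (C : Set (Euc n)) (hC : C = {x | ∀ j, ⟪xs j, x⟫ ≤ c j})
    (F : WithLp 2 (Euc n × Euc d) → Set (Euc n))
    (hF : ∀ p, F p = {ω | ∃ v ∈ convNormal C (pfst p), ω = v + g p})
    (p : WithLp 2 (Euc n × Euc d)) (ω : Euc n)
    (hω : ∃ v ∈ convNormal C (pfst p), ω = g p + v)
    (w : Euc n) (z : WithLp 2 (Euc n × Euc d))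
    (hz : z ∈ coderiv F p ω w) :
    ∀ ε > 0, ∃ (p0 : WithLp 2 (Euc n × Euc d)) (ν0 w0 : Euc n),
      ‖p0 - p‖ < ε ∧ ‖ν0 - (ω - g p)‖ < ε ∧ ‖w0 - w‖ < ε ∧ ν0 ∈ convNormal C (pfst p0) ∧
      (∀ j, ⟪xs j, pfst p0⟫ = c j → 0 ≤ ⟪xs j, w0⟫) ∧ ⟪w0, ν0⟫ = 0 ∧
      ∃ (z0 : WithLp 2 (Euc n × Euc d)) (σ : ℝ), ‖z0 - z‖ < ε ∧ 0 ≤ σ ∧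
        ∀ (p' : WithLp 2 (Euc n × Euc d)) (ν' : Euc n), ν' ∈ convNormal C (pfst p') →
          ⟪z0, p' - p0⟫ - ⟪w0, ν' + g p' - (ν0 + g p0)⟫ ≤
            σ * (‖p' - p0‖ ^ 2 + ‖ν' + g p' - (ν0 + g p0)‖ ^ 2) := by
  intro ε hε
  obtain ⟨δ, hδ, hgδ⟩ := Metric.continuousAt_iff.1 (hg.continuousAt (x := p)) (ε / 2) (half_pos hε)
  obtain ⟨y0, hy0, v0, h1, h2, σ, hσ, h3⟩ := prox_of_mem_limNormal _ _ _ (by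
    obtain ⟨v, hv, hv2⟩ := hω
    change ω ∈ F p
    rw [hF]
    exact ⟨v, hv, by rw [hv2, add_comm]⟩) hz (min (ε / 2) δ) (by positivity)
  have h1a := h1.trans_le (min_le_left _ _)
  have h1b := h1.trans_le (min_le_right _ _)
  have h2a := h2.trans_le (min_le_left _ _)
  have hy0' : psnd y0 ∈ F (pfst y0) := hy0
  rw [hF] at hy0'
  obtain ⟨ν0, hν0, hν0e⟩ := hy0'
  have hp0 : ‖pfst y0 - p‖ ≤ ‖y0 - pmk p ω‖ := norm_pfst_le (y0 - pmk p ω)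
  have hω0 : ‖psnd y0 - ω‖ ≤ ‖y0 - pmk p ω‖ := norm_psnd_le (y0 - pmk p ω)
  have hz0 : ‖pfst v0 - z‖ ≤ ‖v0 - pmk z (-w)‖ := norm_pfst_le (v0 - pmk z (-w))
  have hw0 : ‖psnd v0 - (-w)‖ ≤ ‖v0 - pmk z (-w)‖ := norm_psnd_le (v0 - pmk z (-w))
  have H : ∀ (p' : WithLp 2 (Euc n × Euc d)) (ν' : Euc n), ν' ∈ convNormal C (pfst p') →
          ⟪pfst v0, p' - pfst y0⟫ - ⟪-psnd v0, ν' + g p' - (ν0 + g (pfst y0))⟫ ≤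
            σ * (‖p' - pfst y0‖ ^ 2 + ‖ν' + g p' - (ν0 + g (pfst y0))‖ ^ 2) := by
    intro p' ν' hν'
    have h4 := h3 (pmk p' (ν' + g p')) (by
      change ν' + g p' ∈ F p'
      rw [hF]
      exact ⟨ν', hν', rfl⟩)
    rw [inner_p, norm_sq_p] at h4
    rw [← hν0e, inner_neg_left, sub_neg_eq_add]
    exact h4
  have H2 : ∀ ν' ∈ convNormal C (pfst (pfst y0)), -⟪-psnd v0, ν' - ν0⟫ ≤ σ * ‖ν' - ν0‖ ^ 2 := by
    intro ν' hν'
    have := H (pfst y0) ν' hν'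
    simpa using this
  refine ⟨pfst y0, ν0, -psnd v0, by linarith, ?_, ?_, hν0, ?_, ?_, pfst v0, σ, by linarith, hσ, H⟩
  · have h4 := hgδ (show dist (pfst y0) p < δ by rw [dist_eq_norm]; linarith)
    rw [dist_eq_norm] at h4
    have : ν0 - (ω - g p) = (psnd y0 - ω) - (g (pfst y0) - g p) := by rw [hν0e]; abel
    rw [this]
    have := norm_sub_le (psnd y0 - ω) (g (pfst y0) - g p)
    linarith
  · have : ‖-psnd v0 - w‖ = ‖psnd v0 - (-w)‖ := by rw [← norm_neg]; congr 1; abel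
    linarith
  · intro j hj
    have : -⟪-psnd v0, xs j⟫ ≤ 0 := by
      apply le_zero_of_small _ (σ * ‖xs j‖ ^ 2)
      intro t ht ht1
      have h5 := H2 (ν0 + t • xs j) ⟨hν0.1, by
        intro y hy
        have h6 := hν0.2 y hy
        rw [hC] at hy
        have h7 : ⟪xs j, y - pfst (pfst y0)⟫ ≤ 0 := by
          have := hy j
          rw [inner_sub_right, hj]
          linarith
        rw [inner_add_left, inner_smul_left]
        simp only [conj_trivial]
        have := mul_nonpos_of_nonneg_of_nonpos ht.le h7
        linarith⟩
      rw [add_sub_cancel_left, inner_smul_right, norm_smul, Real.norm_of_nonneg ht.le] at h5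
      have h8 : t * (-⟪-psnd v0, xs j⟫) ≤ t * (t * (σ * ‖xs j‖ ^ 2)) := by nlinarith
      exact le_of_mul_le_mul_left h8 ht
    rw [real_inner_comm]
    linarith
  · have hsc : ∀ a : ℝ, |a| ≤ 1 → -⟪-psnd v0, a • ν0⟫ ≤ σ * ‖a • ν0‖ ^ 2 := by
      intro a ha
      have h5 := H2 (ν0 + a • ν0) ⟨hν0.1, by
        intro y hy
        have h6 := hν0.2 y hy
        rw [inner_add_left, inner_smul_left]
        simp only [conj_trivial]
        have := (abs_le.1 ha).1
        nlinarith⟩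
      rwa [add_sub_cancel_left] at h5
    have hA : -⟪-psnd v0, ν0⟫ ≤ 0 := by
      apply le_zero_of_small _ (σ * ‖ν0‖ ^ 2)
      intro t ht ht1
      have h5 := hsc t (by rw [abs_of_pos ht]; exact ht1)
      rw [inner_smul_right, norm_smul, Real.norm_of_nonneg ht.le] at h5
      have h8 : t * (-⟪-psnd v0, ν0⟫) ≤ t * (t * (σ * ‖ν0‖ ^ 2)) := by nlinarith
      exact le_of_mul_le_mul_left h8 ht
    have hB : ⟪-psnd v0, ν0⟫ ≤ 0 := by
      apply le_zero_of_small _ (σ * ‖ν0‖ ^ 2)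
      intro t ht ht1
      have h5 := hsc (-t) (by rw [abs_neg, abs_of_pos ht]; exact ht1)
      rw [inner_smul_right, norm_smul, norm_neg, Real.norm_of_nonneg ht.le] at h5
      have h8 : t * (⟪-psnd v0, ν0⟫) ≤ t * (t * (σ * ‖ν0‖ ^ 2)) := by nlinarith
      exact le_of_mul_le_mul_left h8 ht
    linarith

/-- From approximate cone-restricted minima to the limiting subdifferential. -/
theorem sum_rule {V : Type*} [NormedAddCommGroup V] [InnerProductSpace ℝ V]
    [FiniteDimensional ℝ V] (h : V → ℝ) (Q : Set V) (hQc : IsClosed Q) (hQ0 : (0 : V) ∈ Q)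
    (hQadd : ∀ a ∈ Q, ∀ b ∈ Q, ∀ t : ℝ, 0 ≤ t → a + t • b ∈ Q)
    (z p : V) (L R : ℝ) (hL : 0 ≤ L) (hR : 0 < R)
    (hlip : ∀ a b : V, ‖a - p‖ < R → ‖b - p‖ < R → |h a - h b| ≤ L * ‖a - b‖)
    (H : ∀ ε > 0, ∃ p0 : V, ‖p0 - p‖ < ε ∧ ∃ ρ > 0, ∀ e ∈ Q, ‖e‖ ≤ ρ →
      ⟪z, e⟫ ≤ h (p0 + e) - h p0 + ε * ‖e‖) :
    ∃ r : V, (∀ e ∈ Q, ⟪r, e⟫ ≤ 0) ∧ z - r ∈ limSubdiff h p := by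
  have key : ∀ k : ℕ, ∃ p1 r : V, ‖p1 - p‖ ≤ 2 * (1 / ((k : ℝ) + 1)) ∧ ‖r‖ ≤ 2 * (L + ‖z‖) ∧
      (∀ e ∈ Q, ⟪r, e⟫ ≤ 2 * (1 / ((k : ℝ) + 1)) * ‖e‖) ∧
      ∃ σ δ : ℝ, 0 < δ ∧ ∀ q, ‖q - p1‖ < δ →
        ⟪z - r, q - p1⟫ ≤ h q - h p1 + σ * ‖q - p1‖ ^ 2 := by
    intro k
    set ε : ℝ := 1 / ((k : ℝ) + 1) with hε
    have hε0 : 0 < ε := by positivity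
    obtain ⟨p0, hp0, ρ, hρ, h1⟩ := H (min ε (R / 2)) (by positivity)
    have hp0a := hp0.trans_le (min_le_left _ _)
    have hp0b := hp0.trans_le (min_le_right _ _)
    have hr1 : min ρ (min ε (R / 4)) ≤ ρ := min_le_left _ _
    have hr2 : min ρ (min ε (R / 4)) ≤ ε := (min_le_right _ _).trans (min_le_left _ _)
    have hr3 : min ρ (min ε (R / 4)) ≤ R / 4 := (min_le_right _ _).trans (min_le_right _ _)
    have hr0 : 0 < min ρ (min ε (R / 4)) := by positivity
    set ρ' := min ρ (min ε (R / 4))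
    have hball : ∀ a : V, ‖a‖ ≤ ρ' → ‖p0 + a - p‖ < R := by
      intro a ha
      have e1 : p0 + a - p = (p0 - p) + a := by abel
      have := norm_add_le (p0 - p) a
      rw [e1]
      linarith
    obtain ⟨a, r, ha, hr, h2, h3⟩ := fuzzy_step h Q hQc hQ0 hQadd z p0 L ε ρ' hL hε0 hr0
      (by
        intro a b ha hb
        have := hlip (p0 + a) (p0 + b) (hball a ha) (hball b hb)
        rwa [add_sub_add_left_eq_sub] at this)
      (by
        intro e he hen
        have h4 := h1 e he (hen.trans hr1)
        have h5 : min ε (R / 2) * ‖e‖ ≤ ε * ‖e‖ :=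
          mul_le_mul_of_nonneg_right (min_le_left _ _) (norm_nonneg _)
        linarith)
    refine ⟨p0 + a, r, ?_, hr, h2, h3⟩
    have e1 : p0 + a - p = (p0 - p) + a := by abel
    have := norm_add_le (p0 - p) a
    rw [e1]
    linarith
  choose p1 r hp1 hr hrQ hprox using key
  have hlim := tendsto_one_div_add_atTop_nhds_zero_nat (𝕜 := ℝ)
  have hlim2 : Tendsto (fun k : ℕ => 2 * (1 / ((k : ℝ) + 1))) atTop (𝓝 0) := by
    simpa using hlim.const_mul 2
  have hp1t : Tendsto p1 atTop (𝓝 p) := by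
    rw [tendsto_iff_norm_sub_tendsto_zero]
    exact squeeze_zero (fun _ => norm_nonneg _) hp1 hlim2
  obtain ⟨r0, -, φ, hφ, hφt⟩ := (isCompact_closedBall (0 : V) (2 * (L + ‖z‖))).tendsto_subseq
    (x := r) (fun k => by simpa using hr k)
  refine ⟨r0, ?_, ?_⟩
  · intro e he
    have t1 : Tendsto (fun k => ⟪r (φ k), e⟫) atTop (𝓝 ⟪r0, e⟫) := hφt.inner tendsto_const_nhds
    have t2 : Tendsto (fun k => 2 * (1 / ((φ k : ℝ) + 1)) * ‖e‖) atTop (𝓝 0) := by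
      simpa using (hlim2.comp hφ.tendsto_atTop).mul_const ‖e‖
    exact le_of_tendsto_of_tendsto' t1 t2 fun k => hrQ (φ k) e he
  · apply mem_limNormal_of_prox
    intro ε hε
    have hp1φ := hp1t.comp hφ.tendsto_atTop
    rw [tendsto_iff_norm_sub_tendsto_zero] at hp1φ hφt
    obtain ⟨k, ⟨hk1, hk2⟩, hk3⟩ := ((hp1φ.eventually_lt_const (show 0 < min R (ε / (2 * (L + 1))) by positivity)).and
      (hφt.eventually_lt_const hε)).and (eventually_ge_atTop 0) |>.exists
    simp only [Function.comp] at hk1 hk2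
    have hka := hk1.trans_le (min_le_left _ _)
    have hkb := hk1.trans_le (min_le_right _ _)
    obtain ⟨σ, δ, hδ, h3⟩ := hprox (φ k)
    refine ⟨pmk (p1 (φ k)) (h (p1 (φ k))), le_refl (h (p1 (φ k))), pmk (z - r (φ k)) (-1), ?_, ?_,
      |σ|, δ, hδ, ?_⟩
    · rw [pmk_sub]
      have h4 := norm_pmk_le (p1 (φ k) - p) (h (p1 (φ k)) - h p)
      have h5 := hlip (p1 (φ k)) p hka (by simpa using hR)
      rw [Real.norm_eq_abs] at h4
      have h6 : (L + 1) * ‖p1 (φ k) - p‖ < (L + 1) * (ε / (2 * (L + 1))) :=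
        mul_lt_mul_of_pos_left hkb (by positivity)
      have h7 : (L + 1) * (ε / (2 * (L + 1))) = ε / 2 := by field_simp
      linarith
    · rw [pmk_sub]
      have h4 := norm_pmk_le (z - r (φ k) - (z - r0)) ((-1 : ℝ) - -1)
      have e1 : z - r (φ k) - (z - r0) = -(r (φ k) - r0) := by abel
      rw [e1, norm_neg] at h4
      simp only [sub_self, norm_zero, add_zero] at h4
      rw [e1, sub_self]
      linarith
    · intro y hy hyd
      have hy' : h (pfst y) ≤ psnd y := hy
      have h4 := norm_pfst_le (y - pmk (p1 (φ k)) (h (p1 (φ k))))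
      have h5 := h3 (pfst y) (lt_of_le_of_lt h4 hyd)
      rw [inner_p]
      change ⟪z - r (φ k), pfst y - p1 (φ k)⟫ + ⟪(-1 : ℝ), psnd y - h (p1 (φ k))⟫ ≤ _
      have h6 : ⟪(-1 : ℝ), psnd y - h (p1 (φ k))⟫ = -(psnd y - h (p1 (φ k))) := by
        simp
      rw [h6]
      have h7 : σ * ‖pfst y - p1 (φ k)‖ ^ 2 ≤ |σ| * ‖y - pmk (p1 (φ k)) (h (p1 (φ k)))‖ ^ 2 := by
        have : ‖pfst y - p1 (φ k)‖ ^ 2 ≤ ‖y - pmk (p1 (φ k)) (h (p1 (φ k)))‖ ^ 2 :=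
          pow_le_pow_left₀ (norm_nonneg _) h4 2
        exact mul_le_mul (le_abs_self _) this (by positivity) (abs_nonneg _)
      linarith

end helpers


/-- coderivative upper estimate for the nonsmooth sweeping mapping
`F(x,u) = N(x;C) + g(x,u)` under PLICQ. -/
theorem statement0 (n d s : ℕ)
    (xs : Fin s → Euc n) (c : Fin s → ℝ)
    (g : WithLp 2 (Euc n × Euc d) → Euc n)
    (hg : LocallyLipschitz g)
    (C : Set (Euc n)) (hC : C = {x | ∀ j, ⟪xs j, x⟫ ≤ c j})
    (F : WithLp 2 (Euc n × Euc d) → Set (Euc n))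
    (hF : ∀ p, F p = {ω | ∃ v ∈ convNormal C (pfst p), ω = v + g p})
    (x : Euc n) (hx : x ∈ C)
    (hPLICQ : ∀ α : Fin s → ℝ, (∀ j, 0 ≤ α j) →
      (∀ j, ⟪xs j, x⟫ ≠ c j → α j = 0) → (∑ j, α j • xs j) = 0 → ∀ j, α j = 0)
    (u : Euc d) (ω : Euc n)
    (hω : ∃ v ∈ convNormal C x, ω = g (pmk x u) + v)
    (w : Euc n) (z : WithLp 2 (Euc n × Euc d))
    (hz : z ∈ coderiv F (pmk x u) ω w) :
    (coderiv (fun y => convNormal C y) x (ω - g (pmk x u)) w).Nonempty ∧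
    ∃ γ : Fin s → ℝ,
      (∀ j, (⟪xs j, x⟫ = c j ∧ 0 < ⟪xs j, w⟫) → 0 ≤ γ j) ∧
      (∀ j, ¬(⟪xs j, x⟫ = c j ∧ 0 ≤ ⟪xs j, w⟫) → γ j = 0) ∧
      z - pmk (∑ j, γ j • xs j) (0 : Euc d) ∈
        limSubdiff (fun p => ⟪w, g p⟫) (pmk x u) := by
  have hgc : Continuous g := hg.continuous
  have hcore := core xs c g hgc C hC F hF (pmk x u) ω hω w z hz
  refine ⟨⟨0, ?_⟩, ?_⟩
  · apply mem_limNormal_of_prox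
    intro ε hε
    obtain ⟨p0, ν0, w0, h1, h2, h3, h4, h5, h6, -⟩ := hcore (ε / 2) (half_pos hε)
    obtain ⟨δ, hδ, hloc⟩ := loc_poly xs c C hC (pfst p0) h4.1
    refine ⟨pmk (pfst p0) ν0, h4, pmk 0 (-w0), ?_, ?_, 0, δ, hδ, ?_⟩
    · rw [pmk_sub]
      have h7 := norm_pmk_le (pfst p0 - x) (ν0 - (ω - g (pmk x u)))
      have h8 : ‖pfst p0 - x‖ ≤ ‖p0 - pmk x u‖ := norm_pfst_le (p0 - pmk x u)
      linarith
    · rw [pmk_sub]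
      have h7 := norm_pmk_le ((0 : Euc n) - 0) (-w0 - -w)
      have h8 : ‖-w0 - -w‖ = ‖w0 - w‖ := by rw [← norm_neg]; congr 1; abel
      rw [h8, sub_self, norm_zero, zero_add] at h7
      rw [sub_self]
      linarith
    · intro y hy hyd
      have hy' : psnd y ∈ convNormal C (pfst y) := hy
      rw [inner_p]
      change ⟪(0 : Euc n), pfst y - pfst p0⟫ + ⟪-w0, psnd y - ν0⟫ ≤ _
      rw [inner_zero_left, inner_neg_left, inner_sub_right, h6]
      have hd : ‖pfst y - pfst p0‖ < δ :=
        lt_of_le_of_lt (norm_pfst_le (y - pmk (pfst p0) ν0)) hyd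
      have h7 : ⟪psnd y, -w0⟫ ≤ 0 := by
        obtain ⟨t, ht, htd⟩ : ∃ t : ℝ, 0 < t ∧ t * ‖w0‖ < δ - ‖pfst y - pfst p0‖ := by
          refine ⟨(δ - ‖pfst y - pfst p0‖) / (‖w0‖ + 1), div_pos (by linarith) (by positivity), ?_⟩
          rw [div_mul_eq_mul_div, div_lt_iff₀ (by positivity)]
          nlinarith [norm_nonneg w0]
        have hyC := hy'.1
        rw [hC] at hyC
        have h8 := hloc (pfst y + t • (-w0)) (by
          have e1 : pfst y + t • (-w0) - pfst p0 = (pfst y - pfst p0) + t • (-w0) := by abel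
          have := norm_add_le (pfst y - pfst p0) (t • (-w0))
          rw [norm_smul, norm_neg, Real.norm_of_nonneg ht.le] at this
          rw [e1]
          linarith) (by
          intro j hj
          have h9 := h5 j hj
          have h10 := hyC j
          have := mul_nonneg ht.le h9
          rw [inner_add_right, inner_smul_right, inner_neg_right]
          linarith)
        have h9 := hy'.2 _ h8
        rw [add_sub_cancel_left, inner_smul_right] at h9
        by_contra hcon
        push Not at hcon
        have := mul_pos ht hcon
        linarith
      rw [inner_neg_right, real_inner_comm] at h7
      simp only [zero_mul]
      linarith
  · set P : Set (Euc n) := {h | ∀ j, ⟪xs j, x⟫ = c j →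
      (0 < ⟪xs j, w⟫ → ⟪xs j, h⟫ ≤ 0) ∧ (⟪xs j, w⟫ = 0 → ⟪xs j, h⟫ = 0)} with hP
    have hPc : IsClosed P := by
      have : P = ⋂ j, {h | ⟪xs j, x⟫ = c j →
          (0 < ⟪xs j, w⟫ → ⟪xs j, h⟫ ≤ 0) ∧ (⟪xs j, w⟫ = 0 → ⟪xs j, h⟫ = 0)} := by
        ext h; simp [hP]
      rw [this]
      refine isClosed_iInter fun j => ?_
      have hcj : Continuous (fun h : Euc n => ⟪xs j, h⟫) := by fun_prop
      by_cases h1 : ⟪xs j, x⟫ = c j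
      · rcases lt_trichotomy ⟪xs j, w⟫ 0 with h2 | h2 | h2
        · simp [h2.ne, h2.not_gt]
        · simpa [h1, h2] using isClosed_eq hcj continuous_const
        · simpa [h1, h2, h2.ne'] using isClosed_le hcj continuous_const
      · simp [h1]
    set Q : Set (WithLp 2 (Euc n × Euc d)) := {e | pfst e ∈ P} with hQ
    have hQc : IsClosed Q := hPc.preimage (WithLp.continuous_fst 2 (Euc n) (Euc d))
    have hQ0 : (0 : WithLp 2 (Euc n × Euc d)) ∈ Q := by
      intro j hj
      change (_ → ⟪xs j, (0 : Euc n)⟫ ≤ 0) ∧ (_ → ⟪xs j, (0 : Euc n)⟫ = 0)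
      simp
    have hQadd : ∀ a ∈ Q, ∀ b ∈ Q, ∀ t : ℝ, 0 ≤ t → a + t • b ∈ Q := by
      intro a ha b hb t ht j hj
      have h1 := ha j hj
      have h2 := hb j hj
      change (_ → ⟪xs j, pfst a + t • pfst b⟫ ≤ 0) ∧ (_ → ⟪xs j, pfst a + t • pfst b⟫ = 0)
      rw [inner_add_right, inner_smul_right]
      constructor
      · intro h
        have := h1.1 h
        have := mul_nonpos_of_nonneg_of_nonpos ht (h2.1 h)
        linarith
      · intro h
        rw [h1.2 h, h2.2 h]; simp
    obtain ⟨L, U, hU, hLU⟩ := hg (pmk x u)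
    obtain ⟨R, hR, hRU⟩ := Metric.mem_nhds_iff.1 hU
    have hglip : ∀ a b, ‖a - pmk x u‖ < R → ‖b - pmk x u‖ < R → ‖g a - g b‖ ≤ L * ‖a - b‖ := by
      intro a b ha hb
      have := hLU.dist_le_mul a (hRU (by rwa [Metric.mem_ball, dist_eq_norm]))
        b (hRU (by rwa [Metric.mem_ball, dist_eq_norm]))
      rwa [dist_eq_norm, dist_eq_norm] at this
    have hL0 : (0 : ℝ) ≤ L := L.2
    -- neighbourhoods on which the signs of strict inequalities persist
    obtain ⟨η, hη, hηx⟩ : ∃ η > 0, ∀ y, ‖y - x‖ < η → ∀ j, ⟪xs j, y⟫ = c j → ⟪xs j, x⟫ = c j := by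
      have : ∀ᶠ y in 𝓝 x, ∀ j, ⟪xs j, y⟫ = c j → ⟪xs j, x⟫ = c j := by
        rw [eventually_all]
        intro j
        by_cases hj : ⟪xs j, x⟫ = c j
        · exact Eventually.of_forall fun _ _ => hj
        · have hcj : Continuous (fun h : Euc n => ⟪xs j, h⟫) := by fun_prop
          filter_upwards [(hcj.tendsto x).eventually_ne hj] with y hy h
          exact absurd h hy
      obtain ⟨η, hη, h⟩ := Metric.eventually_nhds_iff.1 this
      exact ⟨η, hη, fun y hy => h (by rwa [dist_eq_norm])⟩
    obtain ⟨ζ, hζ, hζw⟩ : ∃ ζ > 0, ∀ y, ‖y - w‖ < ζ → ∀ j,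
        (0 < ⟪xs j, w⟫ → 0 < ⟪xs j, y⟫) ∧ (⟪xs j, w⟫ < 0 → ⟪xs j, y⟫ < 0) := by
      have : ∀ᶠ y in 𝓝 w, ∀ j,
          (0 < ⟪xs j, w⟫ → 0 < ⟪xs j, y⟫) ∧ (⟪xs j, w⟫ < 0 → ⟪xs j, y⟫ < 0) := by
        rw [eventually_all]
        intro j
        have hcj : Continuous (fun h : Euc n => ⟪xs j, h⟫) := by fun_prop
        rcases lt_trichotomy ⟪xs j, w⟫ 0 with h2 | h2 | h2
        · filter_upwards [(hcj.tendsto w).eventually_lt_const h2] with y hy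
          exact ⟨fun h => by linarith, fun _ => hy⟩
        · exact Eventually.of_forall fun y => ⟨fun h => by linarith, fun h => by linarith⟩
        · filter_upwards [(hcj.tendsto w).eventually_const_lt h2] with y hy
          exact ⟨fun _ => hy, fun h => by linarith⟩
      obtain ⟨η, hη, h⟩ := Metric.eventually_nhds_iff.1 this
      exact ⟨η, hη, fun y hy => h (by rwa [dist_eq_norm])⟩
    obtain ⟨r, hrQ, hr⟩ := sum_rule (fun p => ⟪w, g p⟫) Q hQc hQ0 hQadd z (pmk x u)
      (‖w‖ * L) R (by positivity) hR (by
        intro a b ha hb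
        rw [← inner_sub_right]
        have h1 := abs_real_inner_le_norm w (g a - g b)
        have h2 := mul_le_mul_of_nonneg_left (hglip a b ha hb) (norm_nonneg w)
        linarith) (by
      intro ε hε
      set ε' := min (ε / (2 * (1 + L))) (min (R / 2) (min η ζ)) with hε'
      have hε'0 : 0 < ε' := by positivity
      have m1 : ε' ≤ ε / (2 * (1 + L)) := min_le_left _ _
      have m2 : ε' ≤ R / 2 := (min_le_right _ _).trans (min_le_left _ _)
      have m3 : ε' ≤ η := (min_le_right _ _).trans ((min_le_right _ _).trans (min_le_left _ _))
      have m4 : ε' ≤ ζ := (min_le_right _ _).trans ((min_le_right _ _).trans (min_le_right _ _))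
      have m1' : ε' * (1 + L) ≤ ε / 2 := by
        have := mul_le_mul_of_nonneg_right m1 (show (0 : ℝ) ≤ 1 + L by positivity)
        have e1 : ε / (2 * (1 + L)) * (1 + L) = ε / 2 := by field_simp
        linarith
      have m1'' : ε' < ε := by nlinarith
      obtain ⟨p0, ν0, w0, h1, h2, h3, h4, h5, h6, z0, σ, h7, hσ, H⟩ := hcore ε' hε'0
      obtain ⟨δ, hδ, hloc⟩ := loc_poly xs c C hC (pfst p0) h4.1
      have hx0 : ‖pfst p0 - x‖ ≤ ‖p0 - pmk x u‖ := norm_pfst_le (p0 - pmk x u)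
      have hact := hηx (pfst p0) (by linarith)
      have hsgn := hζw w0 (by linarith)
      refine ⟨p0, by linarith, min (δ / 2) (min (R / 4) (ε / (2 * (σ * (1 + L ^ 2) + 1)))),
        by positivity, ?_⟩
      intro e he hen
      have n1 := hen.trans (min_le_left _ _)
      have n2 := hen.trans ((min_le_right _ _).trans (min_le_left _ _))
      have n3 := hen.trans ((min_le_right _ _).trans (min_le_right _ _))
      have he1 := norm_pfst_le e
      have heact : ∀ j, ⟪xs j, pfst p0⟫ = c j → ⟪xs j, pfst e⟫ ≤ 0 ∧
          (⟪xs j, w0⟫ = 0 → ⟪xs j, pfst e⟫ = 0) := by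
        intro j hj
        have q1 := he j (hact j hj)
        have q2 := h5 j hj
        rcases lt_trichotomy ⟪xs j, w⟫ 0 with hw | hw | hw
        · have := (hsgn j).2 hw
          linarith
        · exact ⟨(q1.2 hw).le, fun _ => q1.2 hw⟩
        · refine ⟨q1.1 hw, fun h => ?_⟩
          have := (hsgn j).1 hw
          linarith
      have hνe : ⟪ν0, pfst e⟫ = 0 := crit_inner xs c C hC (pfst p0) ν0 w0 h4 h5 h6 (pfst e)
        (fun j hj => (heact j hj).1) (fun j hj => (heact j hj).2)
      have hxe : pfst p0 + pfst e ∈ C := by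
        apply hloc
        · rw [add_sub_cancel_left]; linarith
        · intro j hj
          rw [inner_add_right, hj]
          have := (heact j hj).1
          linarith
      have hνmem : ν0 ∈ convNormal C (pfst (p0 + e)) := by
        refine ⟨hxe, fun y hy => ?_⟩
        change ⟪ν0, y - (pfst p0 + pfst e)⟫ ≤ 0
        rw [← sub_sub, inner_sub_right, hνe]
        have := h4.2 y hy
        linarith
      have hH := H (p0 + e) ν0 hνmem
      rw [add_sub_cancel_left, add_sub_add_left_eq_sub] at hH
      have hgl := hglip (p0 + e) p0 (by
        have e1 : p0 + e - pmk x u = (p0 - pmk x u) + e := by abel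
        have := norm_add_le (p0 - pmk x u) e
        rw [e1]
        linarith) (by linarith)
      rw [add_sub_cancel_left] at hgl
      change ⟪z, e⟫ ≤ ⟪w, g (p0 + e)⟫ - ⟪w, g p0⟫ + ε * ‖e‖
      rw [← inner_sub_right]
      set G := g (p0 + e) - g p0 with hG
      have k1 : ⟪z, e⟫ ≤ ⟪z0, e⟫ + ε' * ‖e‖ := by
        have a1 := real_inner_le_norm (z - z0) e
        rw [inner_sub_left, norm_sub_rev] at a1
        have a2 := mul_le_mul_of_nonneg_right h7.le (norm_nonneg e)
        linarith
      have k2 : ⟪w0, G⟫ ≤ ⟪w, G⟫ + ε' * (L * ‖e‖) := by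
        have a1 := real_inner_le_norm (w0 - w) G
        rw [inner_sub_left] at a1
        have a2 := mul_le_mul h3.le hgl (norm_nonneg G) hε'0.le
        linarith
      have k3 : σ * (‖e‖ ^ 2 + ‖G‖ ^ 2) ≤ ε / 2 * ‖e‖ := by
        have a1 : ‖G‖ ^ 2 ≤ (L * ‖e‖) ^ 2 := pow_le_pow_left₀ (norm_nonneg _) hgl 2
        have a2 : σ * (‖e‖ ^ 2 + ‖G‖ ^ 2) ≤ σ * (‖e‖ ^ 2 + (L * ‖e‖) ^ 2) :=
          mul_le_mul_of_nonneg_left (by linarith) hσ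
        have a3 : (σ * (1 + L ^ 2) + 1) * ‖e‖ ≤ ε / 2 := by
          have := mul_le_mul_of_nonneg_left n3 (show (0 : ℝ) ≤ σ * (1 + L ^ 2) + 1 by positivity)
          have e1 : (σ * (1 + (L : ℝ) ^ 2) + 1) * (ε / (2 * (σ * (1 + L ^ 2) + 1))) = ε / 2 := by
            field_simp
          linarith
        have a4 := mul_le_mul_of_nonneg_right a3 (norm_nonneg e)
        have a5 : 0 ≤ ‖e‖ ^ 2 := by positivity
        nlinarith
      have k4 := mul_le_mul_of_nonneg_right m1' (norm_nonneg e)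
      nlinarith)
    -- Farkas
    have hr2 : psnd r = 0 := by
      have h1 := hrQ (pmk 0 (psnd r)) (by
        intro j hj
        change (_ → ⟪xs j, (0 : Euc n)⟫ ≤ 0) ∧ (_ → ⟪xs j, (0 : Euc n)⟫ = 0)
        simp)
      rw [inner_p] at h1
      change ⟪pfst r, (0 : Euc n)⟫ + ⟪psnd r, psnd r⟫ ≤ 0 at h1
      rw [inner_zero_right, zero_add, real_inner_self_eq_norm_sq] at h1
      have h0 : ‖psnd r‖ = 0 := by nlinarith [norm_nonneg (psnd r)]
      simpa using h0
    have hr1 : ∀ h ∈ P, ⟪pfst r, h⟫ ≤ 0 := by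
      intro h hh
      have h1 := hrQ (pmk h 0) hh
      rw [inner_p] at h1
      change ⟪pfst r, h⟫ + ⟪psnd r, (0 : Euc d)⟫ ≤ 0 at h1
      rwa [inner_zero_right, add_zero] at h1
    classical
    set S : Finset (Fin s ⊕ Fin s) := Finset.univ.filter (fun i => Sum.elim
      (fun j => ⟪xs j, x⟫ = c j ∧ 0 ≤ ⟪xs j, w⟫) (fun j => ⟪xs j, x⟫ = c j ∧ ⟪xs j, w⟫ = 0) i) with hS
    have hSl : ∀ j, Sum.inl j ∈ S ↔ ⟪xs j, x⟫ = c j ∧ 0 ≤ ⟪xs j, w⟫ := by intro j; simp [hS]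
    have hSr : ∀ j, Sum.inr j ∈ S ↔ ⟪xs j, x⟫ = c j ∧ ⟪xs j, w⟫ = 0 := by intro j; simp [hS]
    obtain ⟨l, hl1, hl2, hl3⟩ := farkas_aux S (Sum.elim xs (fun j => -xs j)) (pfst r) (by
      intro h hh
      apply hr1
      intro j hj
      refine ⟨fun hw => ?_, fun hw => ?_⟩
      · simpa using hh (Sum.inl j) ((hSl j).2 ⟨hj, hw.le⟩)
      · have b1 := hh (Sum.inl j) ((hSl j).2 ⟨hj, hw.ge⟩)
        have b2 := hh (Sum.inr j) ((hSr j).2 ⟨hj, hw⟩)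
        simp only [Sum.elim_inl, Sum.elim_inr, inner_neg_left] at b1 b2
        linarith)
    refine ⟨fun j => l (Sum.inl j) - l (Sum.inr j), ?_, ?_, ?_⟩
    · rintro j ⟨hj, hw⟩
      have b1 := hl2 (Sum.inr j) (fun h => hw.ne' ((hSr j).1 h).2)
      have b2 := hl1 (Sum.inl j)
      dsimp only
      linarith
    · intro j hj
      have b1 := hl2 (Sum.inl j) (fun h => hj ((hSl j).1 h))
      have b2 := hl2 (Sum.inr j) (fun h => hj ⟨((hSr j).1 h).1, ((hSr j).1 h).2.ge⟩)
      dsimp only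
      rw [b1, b2, sub_zero]
    · have b1 : pfst r = ∑ j, (l (Sum.inl j) - l (Sum.inr j)) • xs j := by
        rw [hl3, Finset.sum_subset (Finset.subset_univ S) (by
          intro i _ hi
          rw [hl2 i hi, zero_smul]), Fintype.sum_sum_type]
        simp only [Sum.elim_inl, Sum.elim_inr, smul_neg, Finset.sum_neg_distrib, sub_smul,
          Finset.sum_sub_distrib]
        abel
      have b2 : pmk (∑ j, (l (Sum.inl j) - l (Sum.inr j)) • xs j) (0 : Euc d) = r := by
        rw [← b1, ← hr2]; rfl
      rw [b2]
      exact hr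
end
end

section
/- Let C ⊆ ℝⁿ be the convex polyhedron determined by vectors x*_1,…,x*_s ∈ ℝⁿ and scalars c_1,…,c_s, let g : ℝⁿ×ℝ^d → ℝⁿ be locally Lipschitz continuous, and let F(x,u) := N(x;C) + g(x,u). Then for every x ∈ C, u ∈ ℝ^d, ω ∈ g(x,u) + N(x;C), and w ∈ ℝⁿ one has the coderivative sum-rule estimate D*F((x,u),ω)(w) ⊆ {(a, 0) + b : a ∈ D*N_C(x, ω − g(x,u))(w), b ∈ ∂⟨w,g⟩(x,u)}, where (a,0) ∈ ℝⁿ×ℝ^d and ∂⟨w,g⟩(x,u) ⊆ ℝⁿ×ℝ^d is the limiting subdifferential at (x,u) of the function (x,u) ↦ ⟨w, g(x,u)⟩. -/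
open Filter Topology Set MeasureTheory
open scoped RealInnerProductSpace

noncomputable section

section helpers
variable {E : Type*} [NormedAddCommGroup E] [InnerProductSpace ℝ E]

def ProxN (Ω : Set E) (y v : E) : Prop :=
  ∃ σ : ℝ, 0 ≤ σ ∧ ∃ δ > 0, ∀ y' ∈ Ω, ‖y' - y‖ < δ → ⟪v, y' - y⟫ ≤ σ * ‖y' - y‖ ^ 2

theorem proxN_infDist {Ω : Set E} {y v : E} (hy : y ∈ Ω) (h : ProxN Ω y v) (η : ℝ) (hη : 0 < η) :
    ∃ s : ℝ, 0 < s ∧ s ≤ η ∧ s * ‖v‖ ≤ η ∧ ‖(y + s • v) - y‖ = Metric.infDist (y + s • v) Ω := by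
  obtain ⟨σ, hσ, δ, hδ, H⟩ := h
  have hv : 0 ≤ ‖v‖ := norm_nonneg v
  obtain ⟨s, hs0, hs1, hs2, hs3, hs4⟩ : ∃ s : ℝ, 0 < s ∧ s ≤ η ∧ s * ‖v‖ ≤ η ∧ 2 * s * σ ≤ 1 ∧
      2 * (s * ‖v‖) ≤ δ := by
    have t1 : Tendsto (fun s : ℝ => s) (𝓝[>] 0) (𝓝 0) := tendsto_id.mono_left nhdsWithin_le_nhds
    have t2 : Tendsto (fun s : ℝ => s * ‖v‖) (𝓝[>] 0) (𝓝 0) := by simpa using t1.mul_const ‖v‖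
    have t3 : Tendsto (fun s : ℝ => 2 * s * σ) (𝓝[>] 0) (𝓝 0) := by
      simpa using (t1.const_mul 2).mul_const σ
    have t4 : Tendsto (fun s : ℝ => 2 * (s * ‖v‖)) (𝓝[>] 0) (𝓝 0) := by
      simpa using t2.const_mul 2
    have := ((((eventually_mem_nhdsWithin (a := (0:ℝ)) (s := Ioi 0)).and
      (t1.eventually_le_const hη)).and
      (t2.eventually_le_const hη)).and (t3.eventually_le_const one_pos)).and
      (t4.eventually_le_const hδ)
    obtain ⟨s, ⟨⟨⟨⟨a, b⟩, c⟩, d⟩, e⟩⟩ := this.exists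
    exact ⟨s, a, b, c, d, e⟩
  refine ⟨s, hs0, hs1, hs2, ?_⟩
  have hn : ‖(y + s • v) - y‖ = s * ‖v‖ := by
    rw [add_sub_cancel_left, norm_smul, Real.norm_of_nonneg hs0.le]
  apply le_antisymm
  · rw [Metric.le_infDist ⟨y, hy⟩]
    intro y' hy'
    rw [dist_eq_norm, hn]
    by_cases hd : ‖y' - y‖ < δ
    · have h1 := H y' hy' hd
      have h2 : ‖y + s • v - y'‖ ^ 2 = (s * ‖v‖) ^ 2 - 2 * s * ⟪v, y' - y⟫ + ‖y' - y‖ ^ 2 := by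
        rw [show y + s • v - y' = s • v - (y' - y) by abel, norm_sub_sq_real, norm_smul,
          Real.norm_of_nonneg hs0.le, real_inner_smul_left]
        ring
      apply le_of_sq_le_sq _ (norm_nonneg _)
      rw [h2]
      nlinarith [sq_nonneg ‖y' - y‖]
    · have := norm_sub_norm_le (y' - y) (s • v)
      rw [norm_smul, Real.norm_of_nonneg hs0.le] at this
      rw [show y + s • v - y' = -((y' - y) - s • v) by abel, norm_neg]
      linarith
  · rw [← dist_eq_norm]
    exact Metric.infDist_le_dist_of_mem hy

theorem limNormal_of_prox {Ω : Set E} {z v : E}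
    (h : ∀ k : ℕ, ∃ y v', y ∈ Ω ∧ ProxN Ω y v' ∧ ‖y - z‖ ≤ 1 / ((k : ℝ) + 1) ∧
      ‖v' - v‖ ≤ 1 / ((k : ℝ) + 1)) : v ∈ limNormal Ω z := by
  choose y v' hy hp h1 h2 using h
  have h3 := fun k : ℕ => proxN_infDist (hy k) (hp k) (1 / ((k : ℝ) + 1)) (by positivity)
  choose s hs0 hs1 hs2 hs3 using h3
  refine ⟨fun k => y k + s k • v' k, v', fun k => (s k)⁻¹, y, ?_, ?_, ?_, hy, hs3, ?_⟩
  · rw [tendsto_iff_norm_sub_tendsto_zero]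
    refine squeeze_zero (fun _ => norm_nonneg _) (g := fun k : ℕ => 1 / ((k : ℝ) + 1) + 1 / ((k : ℝ) + 1)) ?_ ?_
    · intro k
      rw [show y k + s k • v' k - z = (y k - z) + s k • v' k by abel]
      refine (norm_add_le _ _).trans (add_le_add (h1 k) ?_)
      rw [norm_smul, Real.norm_of_nonneg (hs0 k).le]
      exact hs2 k
    · simpa using (tendsto_one_div_add_atTop_nhds_zero_nat (𝕜 := ℝ)).add
        (tendsto_one_div_add_atTop_nhds_zero_nat (𝕜 := ℝ))
  · rw [tendsto_iff_norm_sub_tendsto_zero]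
    exact squeeze_zero (fun _ => norm_nonneg _) h2 tendsto_one_div_add_atTop_nhds_zero_nat
  · intro k; exact (inv_pos.2 (hs0 k)).le
  · intro k
    simp [smul_smul, inv_mul_cancel₀ (hs0 k).ne']

theorem limNormal_exists {Ω : Set E} {z v : E} (hz : z ∈ Ω) (h : v ∈ limNormal Ω z)
    (η : ℝ) (hη : 0 < η) :
    ∃ y v' : E, ∃ t : ℝ, y ∈ Ω ∧ ‖y - z‖ < η ∧ ‖v' - v‖ < η ∧ 0 ≤ t ∧
      ∀ y' ∈ Ω, ⟪v', y' - y⟫ ≤ t * ‖y' - y‖ ^ 2 := by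
  obtain ⟨zk, vk, tk, yk, h1, h2, h3, h4, h5, h6⟩ := h
  rw [tendsto_iff_norm_sub_tendsto_zero] at h1 h2
  obtain ⟨k, hk1, hk2⟩ := ((h1.eventually_lt_const (half_pos hη)).and
    (h2.eventually_lt_const hη)).exists
  refine ⟨yk k, vk k, tk k / 2, h4 k, ?_, hk2, by have := h3 k; positivity, ?_⟩
  · have : ‖zk k - yk k‖ ≤ ‖zk k - z‖ := by
      rw [h5 k, ← dist_eq_norm]; exact Metric.infDist_le_dist_of_mem hz
    rw [show yk k - z = (zk k - z) - (zk k - yk k) by abel]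
    refine (norm_sub_le _ _).trans_lt ?_
    linarith
  · intro y' hy'
    have h7 : ‖zk k - yk k‖ ≤ ‖zk k - y'‖ := by
      rw [h5 k, ← dist_eq_norm]; exact Metric.infDist_le_dist_of_mem hy'
    have h8 : ‖zk k - y'‖ ^ 2 = ‖zk k - yk k‖ ^ 2 - 2 * ⟪zk k - yk k, y' - yk k⟫
        + ‖y' - yk k‖ ^ 2 := by
      rw [← norm_sub_sq_real]; congr 2; abel
    have h9 : ‖zk k - yk k‖ ^ 2 ≤ ‖zk k - y'‖ ^ 2 := by gcongr
    rw [h6 k, real_inner_smul_left]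
    have := h3 k
    nlinarith

/-- norm bound from a one-sided estimate -/
theorem norm_le_of_local {b p0 : E} {ε σ δ : ℝ} (hε : 0 ≤ ε) (hδ : 0 < δ) 
    (h : ∀ p, ‖p - p0‖ < δ → ⟪b, p - p0⟫ ≤ ε * ‖p - p0‖ + σ * ‖p - p0‖ ^ 2) : ‖b‖ ≤ ε := by
  by_cases hb : b = 0
  · simp [hb, hε]
  have hb' : 0 < ‖b‖ := norm_pos_iff.2 hb
  have t1 : Tendsto (fun s : ℝ => s) (𝓝[>] 0) (𝓝 0) := tendsto_id.mono_left nhdsWithin_le_nhds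
  have t2 : Tendsto (fun s : ℝ => s * ‖b‖) (𝓝[>] 0) (𝓝 0) := by simpa using t1.mul_const ‖b‖
  have t3 : Tendsto (fun s : ℝ => ε + σ * (s * ‖b‖)) (𝓝[>] 0) (𝓝 ε) := by
    simpa using (t2.const_mul σ).const_add ε
  refine ge_of_tendsto t3 ?_
  filter_upwards [eventually_mem_nhdsWithin (a := (0:ℝ)) (s := Ioi 0), t2.eventually_lt_const hδ]
    with s hs hs2
  have hs : 0 < s := hs
  have hn : ‖p0 + s • b - p0‖ = s * ‖b‖ := by
    rw [add_sub_cancel_left, norm_smul, Real.norm_of_nonneg hs.le]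
  have := h (p0 + s • b) (by rw [hn]; exact hs2)
  rw [hn, add_sub_cancel_left, real_inner_smul_right, real_inner_self_eq_norm_sq] at this
  have h3 : (s * ‖b‖) * ‖b‖ ≤ (s * ‖b‖) * (ε + σ * (s * ‖b‖)) := by nlinarith
  exact le_of_mul_le_mul_left h3 (by positivity)

end helpers

theorem penalty {K : Type*} [TopologicalSpace K] {S : Set K} (hS : IsCompact S)
    {f π : K → ℝ} (hf : ContinuousOn f S) (hπ : ContinuousOn π S) (hπ0 : ∀ k, 0 ≤ π k)
    {k0 : K} (hk0 : k0 ∈ S) (h0 : π k0 = 0)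
    (hmin : ∀ k ∈ S, π k = 0 → k ≠ k0 → f k0 < f k) {U : Set K} (hU : IsOpen U) (hkU : k0 ∈ U) :
    ∃ j : ℕ, ∃ k1 ∈ S ∩ U, ∀ k ∈ S, f k1 + j * π k1 ≤ f k + j * π k := by
  have key : ∃ j : ℕ, ∀ k ∈ S \ U, f k0 < f k + j * π k := by
    have hT : IsCompact (S \ U) := hS.diff hU
    have hloc : ∀ k ∈ S \ U, ∃ j : ℕ, ∀ᶠ k' in 𝓝[S \ U] k, f k0 < f k' + j * π k' := by
      intro k hk
      obtain ⟨j, hj⟩ : ∃ j : ℕ, f k0 < f k + j * π k := by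
        rcases (hπ0 k).eq_or_lt with h | h
        · refine ⟨0, ?_⟩
          have := hmin k hk.1 h.symm (fun e => hk.2 (e ▸ hkU))
          simpa using this
        · obtain ⟨j, hj⟩ := exists_nat_gt ((f k0 - f k) / π k)
          rw [div_lt_iff₀ h] at hj
          exact ⟨j, by linarith⟩
      refine ⟨j, ?_⟩
      have hc : ContinuousWithinAt (fun k' => f k' + j * π k') (S \ U) k :=
        (((hf k hk.1).add (continuousWithinAt_const.mul (hπ k hk.1)))).mono sdiff_subset
      exact hc.eventually_const_lt hj
    refine hT.induction_on (p := fun T => ∃ j : ℕ, ∀ k ∈ T, f k0 < f k + j * π k) ⟨0, by simp⟩ ?_ ?_ ?_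
    · rintro s t hst ⟨j, hj⟩; exact ⟨j, fun k hk => hj k (hst hk)⟩
    · rintro s t ⟨j, hj⟩ ⟨i, hi⟩
      refine ⟨max i j, ?_⟩
      rintro k (hk | hk)
      · refine (hj k hk).trans_le ?_
        have : (j : ℝ) ≤ (max i j : ℕ) := by exact_mod_cast le_max_right _ _
        have := mul_le_mul_of_nonneg_right this (hπ0 k); linarith
      · refine (hi k hk).trans_le ?_
        have : (i : ℝ) ≤ (max i j : ℕ) := by exact_mod_cast le_max_left _ _
        have := mul_le_mul_of_nonneg_right this (hπ0 k); linarith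
    · intro k hk
      obtain ⟨j, hj⟩ := hloc k hk
      exact ⟨_, hj, j, fun k hk => hk⟩
  obtain ⟨j, hj⟩ := key
  obtain ⟨k1, hk1, hk1m⟩ := hS.exists_isMinOn ⟨k0, hk0⟩
    (f := fun k => f k + j * π k) (hf.add (continuousOn_const.mul hπ))
  refine ⟨j, k1, ⟨hk1, ?_⟩, fun k hk => hk1m hk⟩
  by_contra hc
  have h1 := hj k1 ⟨hk1, hc⟩
  have h2 : f k1 + j * π k1 ≤ f k0 + j * π k0 := hk1m hk0
  rw [h0] at h2
  linarith

set_option linter.unusedSectionVars false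
section prod
variable {Y U : Type*} [NormedAddCommGroup Y] [InnerProductSpace ℝ Y]
  [NormedAddCommGroup U] [InnerProductSpace ℝ U]

theorem pfst_sub' (p q : WithLp 2 (Y × U)) : pfst (p - q) = pfst p - pfst q := rfl
theorem psnd_sub' (p q : WithLp 2 (Y × U)) : psnd (p - q) = psnd p - psnd q := rfl
theorem pfst_add' (p q : WithLp 2 (Y × U)) : pfst (p + q) = pfst p + pfst q := rfl
theorem psnd_add' (p q : WithLp 2 (Y × U)) : psnd (p + q) = psnd p + psnd q := rfl
theorem pfst_pmk (a : Y) (b : U) : pfst (pmk a b) = a := rfl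
theorem psnd_pmk (a : Y) (b : U) : psnd (pmk a b) = b := rfl
theorem pmk_eta (p : WithLp 2 (Y × U)) : pmk (pfst p) (psnd p) = p := rfl
theorem pinner (p q : WithLp 2 (Y × U)) : ⟪p, q⟫ = ⟪pfst p, pfst q⟫ + ⟪psnd p, psnd q⟫ :=
  WithLp.prod_inner_apply p q
theorem pnorm_sq (p : WithLp 2 (Y × U)) : ‖p‖ ^ 2 = ‖pfst p‖ ^ 2 + ‖psnd p‖ ^ 2 :=
  WithLp.prod_norm_sq_eq_of_L2 p
theorem pfst_le (p : WithLp 2 (Y × U)) : ‖pfst p‖ ≤ ‖p‖ := by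
  apply le_of_sq_le_sq _ (norm_nonneg _)
  rw [pnorm_sq]; nlinarith [sq_nonneg ‖psnd p‖]
theorem psnd_le (p : WithLp 2 (Y × U)) : ‖psnd p‖ ≤ ‖p‖ := by
  apply le_of_sq_le_sq _ (norm_nonneg _)
  rw [pnorm_sq]; nlinarith [sq_nonneg ‖pfst p‖]
theorem pnorm_le (p : WithLp 2 (Y × U)) : ‖p‖ ≤ ‖pfst p‖ + ‖psnd p‖ := by
  apply le_of_sq_le_sq _ (by positivity)
  rw [pnorm_sq]; nlinarith [mul_nonneg (norm_nonneg (pfst p)) (norm_nonneg (psnd p))]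
theorem continuous_pfst : Continuous (pfst : WithLp 2 (Y × U) → Y) :=
  (WithLp.prod_continuous_ofLp 2 Y U).fst
theorem continuous_psnd : Continuous (psnd : WithLp 2 (Y × U) → U) :=
  (WithLp.prod_continuous_ofLp 2 Y U).snd

/-- Proximal subgradient. -/
def ProxS {E : Type*} [NormedAddCommGroup E] [InnerProductSpace ℝ E] (h : E → ℝ) (p b : E) : Prop :=
  ∃ σ : ℝ, 0 ≤ σ ∧ ∃ δ > 0, ∀ p', ‖p' - p‖ < δ →
    ⟪b, p' - p⟫ ≤ h p' - h p + σ * ‖p' - p‖ ^ 2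

theorem proxS_epi {E : Type*} [NormedAddCommGroup E] [InnerProductSpace ℝ E] {h : E → ℝ} {p b : E}
    (H : ProxS h p b) :
    ProxN {q : WithLp 2 (E × ℝ) | h (pfst q) ≤ psnd q} (pmk p (h p)) (pmk b (-1 : ℝ)) := by
  obtain ⟨σ, hσ, δ, hδ, H⟩ := H
  refine ⟨σ, hσ, δ, hδ, fun q hq hqd => ?_⟩
  have h1 : ‖pfst q - p‖ < δ := (pfst_le (q - pmk p (h p))).trans_lt hqd
  have h2 := H _ h1
  have hq : h (pfst q) ≤ psnd q := hq
  rw [pinner, pnorm_sq]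
  simp only [pfst_sub', psnd_sub', pfst_pmk, psnd_pmk]
  have h3 : ⟪(-1 : ℝ), psnd q - h p⟫ = -(psnd q - h p) := by
    simp [inner]
  rw [h3]
  nlinarith [mul_nonneg hσ (sq_nonneg ‖psnd q - h p‖)]

theorem expand_sq {E : Type*} [NormedAddCommGroup E] [InnerProductSpace ℝ E] (p p1 c : E) :
    ‖p - c‖ ^ 2 = ‖p1 - c‖ ^ 2 + 2 * ⟪p1 - c, p - p1⟫ + ‖p - p1‖ ^ 2 := by
  rw [← norm_add_sq_real]; congr 2; abel

set_option maxHeartbeats 2000000 in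
theorem fuzzy [FiniteDimensional ℝ Y] [FiniteDimensional ℝ U]
    {Ω : Set (WithLp 2 (Y × Y))} (hΩ : IsClosed Ω) {g : WithLp 2 (Y × U) → Y}
    {pb : WithLp 2 (Y × U)} {vb : Y} (hb : pmk (pfst pb) vb ∈ Ω)
    {z0 : WithLp 2 (Y × U)} {w0 w : Y} {M ρ L : ℝ} (hM : 0 ≤ M) (hρ : 0 < ρ) (hL : 0 ≤ L)
    (hg : ∀ p ∈ Metric.closedBall pb ρ, ∀ q ∈ Metric.closedBall pb ρ, ‖g p - g q‖ ≤ L * ‖p - q‖)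
    (H : ∀ p ∈ Metric.closedBall pb ρ, ∀ v, pmk (pfst p) v ∈ Ω →
      ⟪z0, p - pb⟫ ≤ ⟪w0, v - vb⟫ + ⟪w0, g p - g pb⟫ + M * (‖p - pb‖ ^ 2 + ‖v - vb‖ ^ 2))
    {η : ℝ} (hη : 0 < η) :
    ∃ (p1 : WithLp 2 (Y × U)) (q1 : WithLp 2 (Y × Y)) (a : Y) (b : WithLp 2 (Y × U)) (w1 : Y),
      ‖p1 - pb‖ < η ∧ ‖q1 - pmk (pfst pb) vb‖ < η ∧ q1 ∈ Ω ∧ ‖w1 - w0‖ < η ∧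
      ProxS (fun p => ⟪w, g p⟫) p1 b ∧ ProxN Ω q1 (pmk a (-w1)) ∧
      ‖z0 - pmk a (0 : U) - b‖ ≤ η + L * ‖w0 - w‖ ∧ ‖b‖ ≤ L * ‖w‖ := by
  have hfd : FiniteDimensional ℝ (WithLp 2 (Y × U)) := inferInstance
  have hfd2 : FiniteDimensional ℝ (WithLp 2 (Y × Y)) := inferInstance
  have : ProperSpace (WithLp 2 (Y × U)) := FiniteDimensional.proper_real _
  have : ProperSpace (WithLp 2 (Y × Y)) := FiniteDimensional.proper_real _
  set qb : WithLp 2 (Y × Y) := pmk (pfst pb) vb with hqb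
  have hgc : ContinuousOn g (Metric.closedBall pb ρ) := by
    refine LipschitzOnWith.continuousOn (K := ⟨L, hL⟩) (LipschitzOnWith.of_dist_le_mul ?_)
    intro p hp q hq
    rw [dist_eq_norm, dist_eq_norm]; exact hg p hp q hq
  -- radius
  obtain ⟨r, hr0, hrρ, hrη, hrM⟩ : ∃ r : ℝ, 0 < r ∧ r < ρ ∧ r < η ∧ 2 * (M + 1) * r < η := by
    refine ⟨min (ρ / 2) (η / (2 * (M + 1) + 1)), by positivity, ?_, ?_, ?_⟩
    · exact (min_le_left _ _).trans_lt (by linarith)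
    · refine (min_le_right _ _).trans_lt ?_
      rw [div_lt_iff₀ (by positivity)]; nlinarith
    · have h1 := min_le_right (ρ / 2) (η / (2 * (M + 1) + 1))
      have h2 : 2 * (M + 1) * (η / (2 * (M + 1) + 1)) < η := by
        rw [← mul_div_assoc, div_lt_iff₀ (by positivity)]; nlinarith
      exact (mul_le_mul_of_nonneg_left h1 (by positivity)).trans_lt h2
  let f : WithLp 2 (Y × U) × WithLp 2 (Y × U) × WithLp 2 (Y × Y) → ℝ := fun k =>
    -⟪z0, k.1 - pb⟫ + ⟪w0, psnd k.2.2 - vb⟫ + ⟪w, g k.1⟫ + ⟪w0 - w, g k.2.1⟫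
      + (M + 1) * (‖k.1 - pb‖ ^ 2 + ‖psnd k.2.2 - vb‖ ^ 2)
  let π : WithLp 2 (Y × U) × WithLp 2 (Y × U) × WithLp 2 (Y × Y) → ℝ := fun k =>
    ‖pfst k.1 - pfst k.2.2‖ ^ 2 + ‖k.1 - k.2.1‖ ^ 2
  let S : Set (WithLp 2 (Y × U) × WithLp 2 (Y × U) × WithLp 2 (Y × Y)) :=
    Metric.closedBall pb ρ ×ˢ (Metric.closedBall pb ρ ×ˢ (Metric.closedBall qb ρ ∩ Ω))
  have hS : IsCompact S := (isCompact_closedBall _ _).prod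
    ((isCompact_closedBall _ _).prod ((isCompact_closedBall _ _).inter_right hΩ))
  have c1 : ContinuousOn (fun k : WithLp 2 (Y × U) × WithLp 2 (Y × U) × WithLp 2 (Y × Y) => g k.1) S :=
    hgc.comp continuous_fst.continuousOn (fun k hk => hk.1)
  have c2 : ContinuousOn (fun k : WithLp 2 (Y × U) × WithLp 2 (Y × U) × WithLp 2 (Y × Y) => g k.2.1) S :=
    hgc.comp continuous_snd.fst.continuousOn (fun k hk => hk.2.1)
  have cf := continuous_pfst (Y := Y) (U := U)
  have cf2 := continuous_pfst (Y := Y) (U := Y)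
  have cs := continuous_psnd (Y := Y) (U := Y)
  have hfc : ContinuousOn f S := by
    refine ContinuousOn.add (ContinuousOn.add (ContinuousOn.add ?_ (continuousOn_const.inner c1))
      (continuousOn_const.inner c2)) ?_
    · exact Continuous.continuousOn (by fun_prop)
    · exact Continuous.continuousOn (by fun_prop)
  have hπc : ContinuousOn π S := Continuous.continuousOn (by fun_prop)
  have hmin : ∀ k ∈ S, π k = 0 → k ≠ (pb, pb, qb) → f (pb, pb, qb) < f k := by
    rintro ⟨p, p2, q⟩ hk h0 hne
    have h0 : ‖pfst p - pfst q‖ ^ 2 + ‖p - p2‖ ^ 2 = 0 := h0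
    have h1 : pfst p = pfst q := by
      rw [← sub_eq_zero, ← norm_eq_zero]; nlinarith [sq_nonneg ‖pfst p - pfst q‖, sq_nonneg ‖p - p2‖]
    have h2 : p = p2 := by
      rw [← sub_eq_zero, ← norm_eq_zero]; nlinarith [sq_nonneg ‖pfst p - pfst q‖, sq_nonneg ‖p - p2‖]
    subst h2
    have h3 := H p hk.1 (psnd q) (by rw [h1, pmk_eta]; exact hk.2.2.2)
    have h4 : 0 < ‖p - pb‖ ^ 2 + ‖psnd q - vb‖ ^ 2 := by
      by_contra hc
      apply hne
      have e1 : p = pb := by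
        rw [← sub_eq_zero, ← norm_eq_zero]; nlinarith [sq_nonneg ‖p - pb‖, sq_nonneg ‖psnd q - vb‖]
      have e2 : psnd q = vb := by
        rw [← sub_eq_zero, ← norm_eq_zero]; nlinarith [sq_nonneg ‖p - pb‖, sq_nonneg ‖psnd q - vb‖]
      have e3 : q = qb := by rw [hqb, ← e1, h1, ← e2, pmk_eta]
      rw [e1, e3]
    simp only [f, hqb, psnd_pmk, sub_self, inner_zero_right, norm_zero]
    simp only [inner_sub_left, inner_sub_right] at h3 ⊢
    nlinarith
  obtain ⟨j, ⟨p1, p2, q1⟩, ⟨hkS, hkU⟩, hk⟩ := penalty hS hfc hπc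
    (fun k => by positivity) (k0 := (pb, pb, qb))
    ⟨Metric.mem_closedBall_self hρ.le, Metric.mem_closedBall_self hρ.le,
      Metric.mem_closedBall_self hρ.le, hb⟩ (by simp [π, hqb, pfst_pmk]) hmin
    (U := Metric.ball pb r ×ˢ (Metric.ball pb r ×ˢ Metric.ball qb r))
    (Metric.isOpen_ball.prod (Metric.isOpen_ball.prod Metric.isOpen_ball))
    ⟨Metric.mem_ball_self hr0, Metric.mem_ball_self hr0, Metric.mem_ball_self hr0⟩
  obtain ⟨hp1, hp2, hq1⟩ : p1 ∈ Metric.ball pb r ∧ p2 ∈ Metric.ball pb r ∧ q1 ∈ Metric.ball qb r := hkU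
  obtain ⟨hp1S, hp2S, hq1S, hq1Ω⟩ := hkS
  simp only at hp1S hp2S hq1S hq1Ω
  rw [Metric.mem_ball, dist_eq_norm] at hp1 hp2 hq1
  have inball : ∀ p p' : WithLp 2 (Y × U), ‖p - pb‖ < r → ‖p' - p‖ < ρ - r →
      p' ∈ Metric.closedBall pb ρ := by
    intro p p' h1 h2
    rw [Metric.mem_closedBall, dist_eq_norm, show p' - pb = (p' - p) + (p - pb) by abel]
    exact (norm_add_le _ _).trans (by linarith)
  have hδ : 0 < ρ - r := by linarith
  set J : ℝ := (j : ℝ) with hJ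
  have hJ0 : 0 ≤ J := by positivity
  set a : Y := (2 * J) • (pfst p1 - pfst q1) with ha
  set e : WithLp 2 (Y × U) := (2 * J) • (p1 - p2) with he
  set b : WithLp 2 (Y × U) := z0 - (2 * (M + 1)) • (p1 - pb) - pmk a (0 : U) - e with hbdef
  set w1 : Y := w0 + (2 * (M + 1)) • (psnd q1 - vb) with hw1
  have hvn : ‖psnd q1 - vb‖ < r := (psnd_le (q1 - qb)).trans_lt hq1
  -- p condition
  have P1 : ∀ p', ‖p' - p1‖ < ρ - r →
      ⟪b, p' - p1⟫ ≤ ⟪w, g p'⟫ - ⟪w, g p1⟫ + (M + 1 + 2 * J) * ‖p' - p1‖ ^ 2 := by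
    intro p' hp'
    have h1 := hk (p', p2, q1) ⟨inball p1 p' hp1 hp', hp2S, hq1S, hq1Ω⟩
    simp only [f, π] at h1
    have e1 := expand_sq p' p1 pb
    have e2 := expand_sq p' p1 p2
    have e3 := expand_sq (pfst p') (pfst p1) (pfst q1)
    have e4 : ‖pfst p' - pfst p1‖ ^ 2 ≤ ‖p' - p1‖ ^ 2 := by
      have := pfst_le (p' - p1); rw [pfst_sub'] at this; gcongr
    have e5 : ⟪b, p' - p1⟫ = ⟪z0, p' - p1⟫ - 2 * (M + 1) * ⟪p1 - pb, p' - p1⟫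
        - 2 * J * ⟪pfst p1 - pfst q1, pfst p' - pfst p1⟫ - 2 * J * ⟪p1 - p2, p' - p1⟫ := by
      rw [hbdef, inner_sub_left, inner_sub_left, inner_sub_left, he, real_inner_smul_left,
        real_inner_smul_left, pinner (pmk a 0), pfst_pmk, psnd_pmk, inner_zero_left, ha,
        real_inner_smul_left, pfst_sub', add_zero]
    have e6 : ⟪z0, p' - pb⟫ = ⟪z0, p' - p1⟫ + ⟪z0, p1 - pb⟫ := by
      rw [← inner_add_right]; congr 1; abel
    rw [e1, e2, e3, e6] at h1
    rw [e5]
    have e7 := mul_le_mul_of_nonneg_left e4 hJ0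
    nlinarith
  have P2 : ‖e‖ ≤ L * ‖w0 - w‖ := by
    refine norm_le_of_local (p0 := p2) (σ := J) (by positivity) hδ ?_
    intro p' hp'
    have hin := inball p2 p' hp2 hp'
    have h1 := hk (p1, p', q1) ⟨hp1S, hin, hq1S, hq1Ω⟩
    simp only [f, π] at h1
    have e2 := expand_sq p' p2 p1
    rw [norm_sub_rev p1 p', norm_sub_rev p1 p2, e2] at h1
    have e3 : ⟪e, p' - p2⟫ = - (2 * J * ⟪p2 - p1, p' - p2⟫) := by
      rw [he, real_inner_smul_left, ← neg_sub p2 p1, inner_neg_left]; ring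
    have e4 : ⟪w0 - w, g p'⟫ - ⟪w0 - w, g p2⟫ ≤ L * ‖w0 - w‖ * ‖p' - p2‖ := by
      rw [← inner_sub_right]
      refine (real_inner_le_norm _ _).trans ?_
      have := mul_le_mul_of_nonneg_left (hg p' hin p2 hp2S) (norm_nonneg (w0 - w))
      linarith
    rw [e3]
    nlinarith
  have P3 : ProxN Ω q1 (pmk a (-w1)) := by
    refine ⟨M + 1 + J, by positivity, ρ - r, hδ, ?_⟩
    intro q hq hqd
    have hin : q ∈ Metric.closedBall qb ρ := by
      rw [Metric.mem_closedBall, dist_eq_norm, show q - qb = (q - q1) + (q1 - qb) by abel]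
      exact (norm_add_le _ _).trans (by linarith)
    have h1 := hk (p1, p2, q) ⟨hp1S, hp2S, hin, hq⟩
    simp only [f, π] at h1
    have e1 := expand_sq (psnd q) (psnd q1) vb
    have e2 := expand_sq (pfst q) (pfst q1) (pfst p1)
    have e6 : ⟪w0, psnd q - vb⟫ = ⟪w0, psnd q - psnd q1⟫ + ⟪w0, psnd q1 - vb⟫ := by
      rw [← inner_add_right]; congr 1; abel
    have e3 : ⟪pmk a (-w1), q - q1⟫ = -(2 * J * ⟪pfst q1 - pfst p1, pfst q - pfst q1⟫)
        - ⟪w0, psnd q - psnd q1⟫ - 2 * (M + 1) * ⟪psnd q1 - vb, psnd q - psnd q1⟫ := by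
      rw [pinner, pfst_pmk, psnd_pmk, pfst_sub', psnd_sub', hw1, ha, real_inner_smul_left,
        inner_neg_left, inner_add_left, real_inner_smul_left, ← neg_sub (pfst q1) (pfst p1),
        inner_neg_left]
      ring
    have e4 := pnorm_sq (q - q1)
    rw [pfst_sub', psnd_sub'] at e4
    rw [norm_sub_rev (pfst p1), norm_sub_rev (pfst p1), e1, e2, e6] at h1
    rw [e3, e4]
    nlinarith [mul_nonneg hJ0 (sq_nonneg ‖psnd q - psnd q1‖),
      mul_nonneg (by positivity : 0 ≤ M + 1) (sq_nonneg ‖pfst q - pfst q1‖)]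
  refine ⟨p1, q1, a, b, w1, hp1.trans hrη, hq1.trans hrη, hq1Ω, ?_, ?_, P3, ?_, ?_⟩
  · rw [hw1, add_sub_cancel_left, norm_smul, Real.norm_of_nonneg (by positivity)]
    refine lt_of_le_of_lt ?_ hrM
    gcongr
  · exact ⟨M + 1 + 2 * J, by positivity, ρ - r, hδ, P1⟩
  · rw [hbdef, show z0 - pmk a (0 : U) - (z0 - (2 * (M + 1)) • (p1 - pb) - pmk a (0 : U) - e)
      = (2 * (M + 1)) • (p1 - pb) + e by abel]
    refine (norm_add_le _ _).trans (add_le_add ?_ P2)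
    rw [norm_smul, Real.norm_of_nonneg (by positivity)]
    refine le_trans ?_ hrM.le
    gcongr
  · refine norm_le_of_local (p0 := p1) (σ := M + 1 + 2 * J) (by positivity) hδ ?_
    intro p' hp'
    refine (P1 p' hp').trans ?_
    have : ⟪w, g p'⟫ - ⟪w, g p1⟫ ≤ L * ‖w‖ * ‖p' - p1‖ := by
      rw [← inner_sub_right]
      refine (real_inner_le_norm _ _).trans ?_
      have := mul_le_mul_of_nonneg_left (hg p' (inball p1 p' hp1 hp') p1 hp1S) (norm_nonneg w)
      linarith
    linarith

end prod

theorem limNormal_of_seq {E : Type*} [NormedAddCommGroup E] [InnerProductSpace ℝ E]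
    {Ω : Set E} {z v : E} {y v' : ℕ → E} (hy : ∀ k, y k ∈ Ω) (hp : ∀ k, ProxN Ω (y k) (v' k))
    (h1 : Tendsto y atTop (𝓝 z)) (h2 : Tendsto v' atTop (𝓝 v)) : v ∈ limNormal Ω z := by
  rw [tendsto_iff_norm_sub_tendsto_zero] at h1 h2
  apply limNormal_of_prox
  intro k
  have hk : (0 : ℝ) < 1 / ((k : ℝ) + 1) := by positivity
  obtain ⟨i, hi1, hi2⟩ := ((h1.eventually_le_const hk).and (h2.eventually_le_const hk)).exists
  exact ⟨y i, v' i, hy i, hp i, hi1, hi2⟩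

theorem continuous_pmk {Y U : Type*} [NormedAddCommGroup Y] [NormedAddCommGroup U] :
    Continuous (fun q : Y × U => (pmk q.1 q.2 : WithLp 2 (Y × U))) :=
  WithLp.prod_continuous_toLp 2 Y U

theorem tendsto_of_rate {E : Type*} [NormedAddCommGroup E] {y : ℕ → E} {z : E}
    (h : ∀ k : ℕ, ‖y k - z‖ ≤ 1 / ((k : ℝ) + 1)) : Tendsto y atTop (𝓝 z) := by
  rw [tendsto_iff_norm_sub_tendsto_zero]
  exact squeeze_zero (fun _ => norm_nonneg _) h tendsto_one_div_add_atTop_nhds_zero_nat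

theorem isClosed_gph {Y : Type*} [NormedAddCommGroup Y] [InnerProductSpace ℝ Y] {C : Set Y}
    (hC : IsClosed C) : IsClosed {q : WithLp 2 (Y × Y) | psnd q ∈ convNormal C (pfst q)} := by
  have cf := continuous_pfst (Y := Y) (U := Y)
  have cs := continuous_psnd (Y := Y) (U := Y)
  have : {q : WithLp 2 (Y × Y) | psnd q ∈ convNormal C (pfst q)}
      = pfst ⁻¹' C ∩ ⋂ y ∈ C, {q : WithLp 2 (Y × Y) | ⟪psnd q, y - pfst q⟫ ≤ 0} := by
    ext q; simp [convNormal]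
  rw [this]
  refine (hC.preimage cf).inter (isClosed_biInter fun y _ => isClosed_le (by fun_prop) (by fun_prop))

set_option maxHeartbeats 2000000 in
theorem approx {Y U : Type*} [NormedAddCommGroup Y] [InnerProductSpace ℝ Y]
    [NormedAddCommGroup U] [InnerProductSpace ℝ U] [FiniteDimensional ℝ Y] [FiniteDimensional ℝ U]
    {N : Y → Set Y} (hΩ : IsClosed {q : WithLp 2 (Y × Y) | psnd q ∈ N (pfst q)})
    {g : WithLp 2 (Y × U) → Y} {F : WithLp 2 (Y × U) → Set Y}
    (hF : ∀ p, F p = {ω | ∃ v ∈ N (pfst p), ω = v + g p})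
    {pb z : WithLp 2 (Y × U)} {ω w : Y} (hω : ω ∈ F pb) {ρ L : ℝ} (hρ : 0 < ρ) (hL : 0 ≤ L)
    (hg : ∀ p ∈ Metric.closedBall pb (2 * ρ), ∀ q ∈ Metric.closedBall pb (2 * ρ),
      ‖g p - g q‖ ≤ L * ‖p - q‖)
    (hz : z ∈ coderiv F pb ω w) {η : ℝ} (hη : 0 < η) :
    ∃ (p1 : WithLp 2 (Y × U)) (q1 : WithLp 2 (Y × Y)) (a : Y) (b : WithLp 2 (Y × U)) (w1 : Y),
      ‖p1 - pb‖ ≤ η ∧ ‖q1 - pmk (pfst pb) (ω - g pb)‖ ≤ η ∧ psnd q1 ∈ N (pfst q1) ∧ ‖w1 - w‖ ≤ η ∧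
      ProxS (fun p => ⟪w, g p⟫) p1 b ∧
      ProxN {q : WithLp 2 (Y × Y) | psnd q ∈ N (pfst q)} q1 (pmk a (-w1)) ∧
      ‖z - pmk a (0 : U) - b‖ ≤ η ∧ ‖b‖ ≤ L * ‖w‖ := by
  obtain ⟨η₁, h0, hρ1, hη1⟩ : ∃ η₁ : ℝ, 0 < η₁ ∧ η₁ ≤ ρ ∧ (4 + L) * η₁ ≤ η := by
    refine ⟨min ρ (η / (4 + L)), by positivity, min_le_left _ _, ?_⟩
    have := min_le_right ρ (η / (4 + L))
    rwa [le_div_iff₀ (by positivity), mul_comm] at this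
  have hLη : 0 ≤ L * η₁ := by positivity
  obtain ⟨y, v', t, hy, hyz, hv', ht, H⟩ := limNormal_exists (z := pmk pb ω) hω hz η₁ h0
  set pk := pfst y with hpk
  set ωk := psnd y with hωk
  set zk := pfst v' with hzk
  have hpk1 : ‖pk - pb‖ < η₁ := (pfst_le (y - pmk pb ω)).trans_lt hyz
  have hωk1 : ‖ωk - ω‖ < η₁ := (psnd_le (y - pmk pb ω)).trans_lt hyz
  have hzk1 : ‖zk - z‖ < η₁ := (pfst_le (v' - pmk z (-w))).trans_lt hv'
  have hwk1 : ‖-psnd v' - w‖ < η₁ := by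
    have := (psnd_le (v' - pmk z (-w))).trans_lt hv'
    rw [psnd_sub', psnd_pmk] at this
    rwa [← norm_neg, show -(-psnd v' - w) = psnd v' - -w by abel]
  set wk := -psnd v' with hwk
  set vk := ωk - g pk with hvk
  have hyF : ωk ∈ F pk := hy
  have hvkN : vk ∈ N (pfst pk) := by
    rw [hF] at hyF
    obtain ⟨v, hv, e⟩ := hyF
    rw [hvk, e]; simpa using hv
  have hsub : ∀ p ∈ Metric.closedBall pk ρ, p ∈ Metric.closedBall pb (2 * ρ) := by
    intro p hp
    rw [Metric.mem_closedBall, dist_eq_norm] at hp ⊢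
    rw [show p - pb = (p - pk) + (pk - pb) by abel]
    exact (norm_add_le _ _).trans (by linarith)
  have hpkm : pk ∈ Metric.closedBall pb (2 * ρ) := hsub _ (Metric.mem_closedBall_self hρ.le)
  have hpbm : pb ∈ Metric.closedBall pb (2 * ρ) := Metric.mem_closedBall_self (by linarith)
  obtain ⟨p1, q1, a, b, w1, r1, r2, r3, r4, r5, r6, r7, r8⟩ := fuzzy hΩ (g := g) (pb := pk) (vb := vk)
    (z0 := zk) (w0 := wk) (w := w) (M := t * (2 + 2 * L ^ 2)) (ρ := ρ) (L := L) hvkN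
    (by positivity) hρ hL (fun p hp q hq => hg p (hsub p hp) q (hsub q hq)) (by
      intro p hp v hv
      have hv : v ∈ N (pfst p) := hv
      have h1 := H (pmk p (v + g p)) (by
        change v + g p ∈ F p
        rw [hF]; exact ⟨v, hv, rfl⟩)
      rw [pinner, pnorm_sq] at h1
      simp only [pfst_sub', psnd_sub', pfst_pmk, psnd_pmk] at h1
      rw [← hpk, ← hωk, ← hzk] at h1
      have e1 : v + g p - ωk = (v - vk) + (g p - g pk) := by rw [hvk]; abel
      have e2 : psnd v' = -wk := by rw [hwk, neg_neg]
      rw [e1, e2, inner_neg_left, inner_add_right] at h1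
      have e3 : ‖v - vk + (g p - g pk)‖ ≤ ‖v - vk‖ + L * ‖p - pk‖ :=
        (norm_add_le _ _).trans (add_le_add le_rfl (hg p (hsub p hp) pk hpkm))
      have e4 : ‖v - vk + (g p - g pk)‖ ^ 2 ≤ 2 * ‖v - vk‖ ^ 2 + 2 * L ^ 2 * ‖p - pk‖ ^ 2 := by
        have : ‖v - vk + (g p - g pk)‖ ^ 2 ≤ (‖v - vk‖ + L * ‖p - pk‖) ^ 2 := by gcongr
        nlinarith [sq_nonneg (‖v - vk‖ - L * ‖p - pk‖)]
      have e5 : ‖p - pk‖ ^ 2 + ‖v - vk + (g p - g pk)‖ ^ 2 ≤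
          (2 + 2 * L ^ 2) * (‖p - pk‖ ^ 2 + ‖v - vk‖ ^ 2) := by
        nlinarith [sq_nonneg ‖p - pk‖, mul_nonneg (sq_nonneg L) (sq_nonneg ‖v - vk‖)]
      have e6 := mul_le_mul_of_nonneg_left e5 ht
      linarith) h0
  refine ⟨p1, q1, a, b, w1, ?_, ?_, r3, ?_, r5, r6, ?_, r8⟩
  · rw [show p1 - pb = (p1 - pk) + (pk - pb) by abel]
    exact (norm_add_le _ _).trans (by linarith)
  · have e1 : ‖(pmk (pfst pk) vk : WithLp 2 (Y × Y)) - pmk (pfst pb) (ω - g pb)‖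
        ≤ η₁ + (η₁ + L * η₁) := by
      refine (pnorm_le _).trans (add_le_add ?_ ?_)
      · exact (pfst_le (pk - pb)).trans hpk1.le
      · rw [psnd_sub', psnd_pmk, psnd_pmk, hvk,
          show ωk - g pk - (ω - g pb) = (ωk - ω) - (g pk - g pb) by abel]
        refine (norm_sub_le _ _).trans (add_le_add hωk1.le ((hg pk hpkm pb hpbm).trans ?_))
        gcongr
    rw [show q1 - pmk (pfst pb) (ω - g pb) = (q1 - pmk (pfst pk) vk) +
      (pmk (pfst pk) vk - pmk (pfst pb) (ω - g pb)) by abel]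
    exact (norm_add_le _ _).trans (by linarith)
  · rw [show w1 - w = (w1 - wk) + (wk - w) by abel]
    exact (norm_add_le _ _).trans (by linarith)
  · rw [show z - pmk a (0 : U) - b = (zk - pmk a (0 : U) - b) - (zk - z) by abel]
    have := mul_le_mul_of_nonneg_left hwk1.le hL
    exact (norm_sub_le _ _).trans (by linarith)

/-- coderivative sum-rule estimate for `F(x,u) = N(x;C) + g(x,u)` with a
locally Lipschitz perturbation `g`. -/
theorem statement4 (n d s : ℕ)
    (xs : Fin s → Euc n) (c : Fin s → ℝ)
    (g : WithLp 2 (Euc n × Euc d) → Euc n)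
    (hg : LocallyLipschitz g)
    (C : Set (Euc n)) (hC : C = {x | ∀ j, ⟪xs j, x⟫ ≤ c j})
    (F : WithLp 2 (Euc n × Euc d) → Set (Euc n))
    (hF : ∀ p, F p = {ω | ∃ v ∈ convNormal C (pfst p), ω = v + g p}) :
    ∀ (x : Euc n), x ∈ C → ∀ (u : Euc d) (ω : Euc n),
      (∃ v ∈ convNormal C x, ω = g (pmk x u) + v) →
      ∀ (w : Euc n) (z : WithLp 2 (Euc n × Euc d)),
        z ∈ coderiv F (pmk x u) ω w →
        ∃ a ∈ coderiv (fun y => convNormal C y) x (ω - g (pmk x u)) w,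
          ∃ b ∈ limSubdiff (fun p => ⟪w, g p⟫) (pmk x u),
            z = pmk a (0 : Euc d) + b := by
  intro x hx u ω hω w z hz
  have hCc : IsClosed C := by
    rw [hC, Set.setOf_forall]
    exact isClosed_iInter fun j => isClosed_le (by fun_prop) (by fun_prop)
  have hΩ := isClosed_gph hCc
  set pb : WithLp 2 (Euc n × Euc d) := pmk x u with hpb
  obtain ⟨K, s', hs', hK⟩ := hg pb
  obtain ⟨r, hr, hrs⟩ := Metric.nhds_basis_closedBall.mem_iff.1 hs'
  have hgl : ∀ p ∈ Metric.closedBall pb (2 * (r / 2)), ∀ q ∈ Metric.closedBall pb (2 * (r / 2)),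
      ‖g p - g q‖ ≤ (K : ℝ) * ‖p - q‖ := by
    rw [show 2 * (r / 2) = r by ring]
    intro p hp q hq
    rw [← dist_eq_norm, ← dist_eq_norm]
    exact hK.dist_le_mul p (hrs hp) q (hrs hq)
  have hωF : ω ∈ F pb := by
    rw [hF]
    obtain ⟨v, hv, e⟩ := hω
    exact ⟨v, hv, by rw [e, add_comm]⟩
  have happ := fun k : ℕ => approx hΩ hF hωF (half_pos hr) K.2 hgl hz
    (η := 1 / ((k : ℝ) + 1)) (by positivity)
  choose p1 q1 a b w1 r1 r2 r3 r4 r5 r6 r7 r8 using happ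
  obtain ⟨b0, -, φ, hφ, hb0⟩ := (isCompact_closedBall (0 : WithLp 2 (Euc n × Euc d))
    ((K : ℝ) * ‖w‖)).tendsto_subseq (x := b) (fun k => by
      rw [mem_closedBall_zero_iff]; exact r8 k)
  have hφt := hφ.tendsto_atTop
  have tp := (tendsto_of_rate r1).comp hφt
  have tq := (tendsto_of_rate r2).comp hφt
  have tw := (tendsto_of_rate r4).comp hφt
  have tz : Tendsto (fun k => z - pmk (a k) (0 : Euc d) - b k) atTop (𝓝 0) :=
    tendsto_of_rate (fun k => by rw [sub_zero]; exact r7 k)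
  have tz := tz.comp hφt
  have ta : Tendsto (fun k => (pmk (a (φ k)) (0 : Euc d) : WithLp 2 (Euc n × Euc d))) atTop
      (𝓝 (z - b0)) := by
    have := (tendsto_const_nhds (x := z)).sub (tz.add hb0)
    rw [zero_add] at this
    refine this.congr fun k => ?_
    simp only [Function.comp]
    abel
  have ta1 : Tendsto (fun k => a (φ k)) atTop (𝓝 (pfst (z - b0))) :=
    (continuous_pfst.tendsto _).comp ta
  have ta2 : Tendsto (fun _ : ℕ => (0 : Euc d)) atTop (𝓝 (psnd (z - b0))) :=
    (continuous_psnd.tendsto _).comp ta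
  have hs0 : psnd (z - b0) = 0 := tendsto_nhds_unique ta2 tendsto_const_nhds
  refine ⟨pfst (z - b0), ?_, b0, ?_, ?_⟩
  · refine limNormal_of_seq (fun k => r3 (φ k)) (fun k => r6 (φ k)) tq ?_
    exact (continuous_pmk.tendsto (pfst (z - b0), -w)).comp (ta1.prodMk_nhds tw.neg)
  · refine limNormal_of_seq (y := fun k => pmk (p1 (φ k)) ⟪w, g (p1 (φ k))⟫)
      (v' := fun k => pmk (b (φ k)) (-1)) (fun k => ?_) (fun k => proxS_epi (r5 (φ k))) ?_ ?_
    · exact le_refl ⟪w, g (p1 (φ k))⟫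
    · have hc : Continuous fun p => ⟪w, g p⟫ := continuous_const.inner hg.continuous
      exact (continuous_pmk.tendsto (pb, ⟪w, g pb⟫)).comp
        (tp.prodMk_nhds ((hc.tendsto pb).comp tp))
    · exact (continuous_pmk.tendsto (b0, (-1 : ℝ))).comp (hb0.prodMk_nhds tendsto_const_nhds)
  · rw [← hs0, pmk_eta, sub_add_cancel]
end
end
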